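/- arXiv:1705.00560 — 2 statements merged into one kernel-verified Lean document; each statement's English description precedes it below -/
import Mathlib

section
/- Let μ₁, μ₂ be compactly supported Borel probability measures on ℝ² and let 0 < c₀ < C₀ be constants such that c₀ ≤ |x| ≤ C₀, c₀ ≤ |y| ≤ C₀ and c₀ ≤ |x·y^⊥| ≤ C₀ for all x in the support of μ₁ and y in the support of μ₂. Let ψ be a smooth compactly supported function on SL₂(ℝ) and λ a right Haar measure on SL₂(ℝ). Then there exists K ≥ 1 such that for every N ∈ ℕ there is a constant C_N with the following property: for all ξ, η ∈ ℝ² with max(|ξ|,|η|) ≥ 1 for which it is NOT the case that ( K^{−1}|η| ≤ |ξ| ≤ K|η| and |ξ·η^⊥| ≥ K^{−1} max(|ξ|,|η|)² ), one has | ∫_{SL₂(ℝ)} μ̂₁(gξ) μ̂₂(gη) ψ(g) dλ(g) | ≤ C_N max(|ξ|,|η|)^{−N}. -/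
open MeasureTheory Metric
open scoped ENNReal RealInnerProductSpace

noncomputable instance matrixMeasurableSpace (m n : Type*) :
    MeasurableSpace (Matrix m n ℝ) := borel _

instance matrixBorelSpace (m n : Type*) : BorelSpace (Matrix m n ℝ) := ⟨rfl⟩

noncomputable instance matrixNormedAddCommGroup (m n : Type*) [Fintype m] [Fintype n] :
    NormedAddCommGroup (Matrix m n ℝ) := Matrix.normedAddCommGroup

noncomputable instance matrixNormedSpace (m n : Type*) [Fintype m] [Fintype n] :
    NormedSpace ℝ (Matrix m n ℝ) := Matrix.normedSpace

noncomputable instance SL2MeasurableSpace :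
    MeasurableSpace (Matrix.SpecialLinearGroup (Fin 2) ℝ) :=
  inferInstanceAs (MeasurableSpace {A : Matrix (Fin 2) (Fin 2) ℝ // A.det = 1})

instance SL2TopologicalSpace :
    TopologicalSpace (Matrix.SpecialLinearGroup (Fin 2) ℝ) :=
  inferInstanceAs (TopologicalSpace {A : Matrix (Fin 2) (Fin 2) ℝ // A.det = 1})

/-- The Fourier transform `μ̂(ξ) = ∫ e^{-2πi x·ξ} dμ(x)` of a finite Borel measure on `ℝ²`. -/
noncomputable def measureFT (μ : Measure (EuclideanSpace ℝ (Fin 2)))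
    (ξ : EuclideanSpace ℝ (Fin 2)) : ℂ :=
  ∫ x, Complex.exp (((-2 * Real.pi * ⟪x, ξ⟫ : ℝ) : ℂ) * Complex.I) ∂μ

/-- The derivative of a compactly supported function along a vector field is compactly supported. -/
theorem HasCompactSupport.fderiv_apply_field {E G : Type*} [NormedAddCommGroup E]
    [NormedSpace ℝ E] [NormedAddCommGroup G] [NormedSpace ℝ G] {f : E → G}
    (hf : HasCompactSupport f) (X : E → E) :
    HasCompactSupport fun g => _root_.fderiv ℝ f g (X g) := by
  refine hf.mono' fun h hh => ?_
  by_contra hcon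
  refine hh ?_
  have : _root_.fderiv ℝ f h = 0 := by
    by_contra h0
    exact hcon (support_fderiv_subset ℝ h0)
  simp [this]

/-- Integration by parts along a nilpotent linear vector field whose (affine) flow preserves the
measure. -/
theorem integral_fderiv_apply_eq_zero_of_measurePreserving
    {E : Type*} [NormedAddCommGroup E] [NormedSpace ℝ E] [FiniteDimensional ℝ E]
    [MeasurableSpace E] [BorelSpace E] (ν : Measure E) [IsFiniteMeasureOnCompacts ν]
    (T : E →L[ℝ] E) (hT : ∀ g, T (T g) = 0)
    (hinv : ∀ t : ℝ, ν.map (fun g => g + t • T g) = ν)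
    {f : E → ℂ} (hf : ContDiff ℝ 1 f) (hfc : HasCompactSupport f) :
    ∫ g, fderiv ℝ f g (T g) ∂ν = 0 := by
  have hGcont : Continuous fun h => fderiv ℝ f h (T h) :=
    (hf.continuous_fderiv one_ne_zero).clm_apply T.continuous
  have hGc : HasCompactSupport fun h => fderiv ℝ f h (T h) := hfc.fderiv_apply_field T
  obtain ⟨C, hC⟩ := hGc.exists_bound_of_continuous hGcont
  set S : Set E := (fun p : ℝ × E => p.2 - p.1 • T p.2) '' (Set.Icc (-1) 1 ×ˢ tsupport f)
  have hS : IsCompact S := (isCompact_Icc.prod hfc.isCompact).image (by fun_prop)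
  have hTt : ∀ (t : ℝ) g, T (g + t • T g) = T g := fun t g => by simp [hT]
  have key := hasDerivAt_integral_of_dominated_loc_of_deriv_le (μ := ν) (𝕜 := ℝ) (x₀ := (0 : ℝ))
    (F := fun t g => f (g + t • T g))
    (F' := fun t g => fderiv ℝ f (g + t • T g) (T (g + t • T g)))
    (s := Set.Icc (-1) 1) (bound := S.indicator fun _ => C)
    (Icc_mem_nhds (by norm_num) (by norm_num))
    (Filter.Eventually.of_forall fun t =>
      (hf.continuous.comp (by fun_prop)).aestronglyMeasurable)
    (by simpa using hf.continuous.integrable_of_hasCompactSupport hfc)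
    (by simpa using hGcont.aestronglyMeasurable)
    (Filter.Eventually.of_forall fun g t ht => by
      by_cases hg : g + t • T g ∈ tsupport f
      · have hgS : g ∈ S := ⟨(t, g + t • T g), ⟨ht, hg⟩, by simp [hT]⟩
        rw [Set.indicator_of_mem hgS]
        exact hC _
      · have : fderiv ℝ f (g + t • T g) = 0 := by
          by_contra h0
          exact hg (support_fderiv_subset ℝ h0)
        rw [this]
        simpa using Set.indicator_nonneg (fun _ _ => (norm_nonneg _).trans (hC 0)) g)
    ((integrableOn_const hS.measure_lt_top.ne).integrable_indicator hS.measurableSet)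
    (Filter.Eventually.of_forall fun g t _ => by
      rw [hTt]
      have h1 : HasDerivAt (fun t : ℝ => g + t • T g) (T g) t := by
        simpa using ((hasDerivAt_id t).smul_const (T g)).const_add g
      exact ((hf.differentiable one_ne_zero _).hasFDerivAt).comp_hasDerivAt t h1)
  have hconst : (fun t : ℝ => ∫ g, f (g + t • T g) ∂ν) = fun _ => ∫ g, f g ∂ν := by
    funext t
    conv_rhs => rw [← hinv t]
    rw [integral_map (by fun_prop) hf.continuous.aestronglyMeasurable]
  have h2 := key.2
  rw [hconst] at h2
  simpa using h2.unique (hasDerivAt_const _ _)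

/-- The oscillating factor `exp(-2πi R B(A, g))`. -/
noncomputable def oscFactor {F E : Type*} [NormedAddCommGroup E] [NormedSpace ℝ E]
    [NormedAddCommGroup F] [NormedSpace ℝ F]
    (B : F →L[ℝ] E →L[ℝ] ℝ) (R : ℝ) (A : F) (g : E) : ℂ :=
  Complex.exp (((-2 * Real.pi * (R * B A g) : ℝ) : ℂ) * Complex.I)

theorem norm_oscFactor {F E : Type*} [NormedAddCommGroup E] [NormedSpace ℝ E]
    [NormedAddCommGroup F] [NormedSpace ℝ F]
    (B : F →L[ℝ] E →L[ℝ] ℝ) (R : ℝ) (A : F) (g : E) : ‖oscFactor B R A g‖ = 1 :=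
  Complex.norm_exp_ofReal_mul_I _

theorem hasFDerivAt_oscFactor {F E : Type*} [NormedAddCommGroup E] [NormedSpace ℝ E]
    [NormedAddCommGroup F] [NormedSpace ℝ F]
    (B : F →L[ℝ] E →L[ℝ] ℝ) (R : ℝ) (A : F) (g : E) :
    HasFDerivAt (oscFactor B R A)
      ((B A).smulRight ((((-2 * Real.pi * R : ℝ) : ℂ) * Complex.I) * oscFactor B R A g)) g := by
  have h1 : HasFDerivAt (fun g => (((-2 * Real.pi * (R * B A g) : ℝ) : ℂ) * Complex.I))
      ((B A).smulRight (((-2 * Real.pi * R : ℝ) : ℂ) * Complex.I)) g := by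
    have := ((B A).smulRight (((-2 * Real.pi * R : ℝ) : ℂ) * Complex.I)).hasFDerivAt (x := g)
    refine this.congr_of_eventuallyEq (Filter.Eventually.of_forall fun h => ?_)
    simp only [ContinuousLinearMap.smulRight_apply, Complex.real_smul]
    push_cast
    ring
  refine h1.cexp.congr_fderiv ?_
  ext v
  simp only [ContinuousLinearMap.smulRight_apply, _root_.smul_apply, oscFactor,
    Complex.real_smul, smul_eq_mul]
  ring

theorem contDiff_oscFactor {F E : Type*} [NormedAddCommGroup E] [NormedSpace ℝ E]
    [NormedAddCommGroup F] [NormedSpace ℝ F]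
    (B : F →L[ℝ] E →L[ℝ] ℝ) (R : ℝ) (A : F) {n : WithTop ℕ∞} :
    ContDiff ℝ n (oscFactor B R A) := by
  have : ContDiff ℝ n fun g => -2 * Real.pi * (R * B A g) :=
    contDiff_const.mul (contDiff_const.mul (B A).contDiff)
  exact ((Complex.ofRealCLM.contDiff.comp this).mul contDiff_const).cexp

/-- If `u` is smooth and `q` is a smooth function not vanishing on `tsupport u`, then `u / q` is
smooth. -/
theorem ContDiff.div_of_ne_zero_on_tsupport {V : Type*} [NormedAddCommGroup V] [NormedSpace ℝ V]
    {n : WithTop ℕ∞} {u q : V → ℝ} (hu : ContDiff ℝ n u) (hq : ContDiff ℝ n q)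
    (hne : ∀ p ∈ tsupport u, q p ≠ 0) : ContDiff ℝ n fun p => u p / q p := by
  refine contDiff_iff_contDiffAt.2 fun p => ?_
  by_cases hp : p ∈ tsupport u
  · exact hu.contDiffAt.div hq.contDiffAt (hne p hp)
  · refine (contDiffAt_const (c := (0 : ℝ))).congr_of_eventuallyEq ?_
    filter_upwards [(isClosed_tsupport u).isOpen_compl.mem_nhds hp] with z hz
    simp [image_eq_zero_of_notMem_tsupport hz]

theorem HasCompactSupport.slice {F E : Type*} [TopologicalSpace F] [TopologicalSpace E] [R1Space E]
    {u : F × E → ℝ} (huc : HasCompactSupport u) (A : F) :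
    HasCompactSupport fun g => u (A, g) := by
  refine HasCompactSupport.intro (K := Prod.snd '' tsupport u)
    (huc.isCompact.image continuous_snd) fun g hg => ?_
  exact image_eq_zero_of_notMem_tsupport fun h => hg ⟨_, h, rfl⟩

open scoped Manifold in
/-- A smooth compactly supported cutoff: equal to one on a compact set and supported in a given
open neighbourhood of it. -/
theorem exists_contDiff_hasCompactSupport_eq_one {V : Type*} [NormedAddCommGroup V]
    [NormedSpace ℝ V] [FiniteDimensional ℝ V] {K U : Set V} (hK : IsCompact K) (hU : IsOpen U)
    (hKU : K ⊆ U) :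
    ∃ χ : V → ℝ, ContDiff ℝ (⊤ : ℕ∞) χ ∧ HasCompactSupport χ ∧ tsupport χ ⊆ U ∧
      ∀ p ∈ K, χ p = 1 := by
  obtain ⟨L, hL, hKL, hLU⟩ := exists_compact_between hK hU hKU
  obtain ⟨f, hf1, hf0, -⟩ := exists_contMDiffMap_one_nhds_of_subset_interior 𝓘(ℝ, V)
    (n := (⊤ : ℕ∞)) hK.isClosed hKL
  have hsupp : Function.support f ⊆ L := fun p hp => by
    by_contra h
    exact hp (hf0 p h)
  have htsupp : tsupport f ⊆ L := closure_minimal hsupp hL.isClosed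
  exact ⟨f, f.contMDiff.contDiff, hL.of_isClosed_subset (isClosed_tsupport _) htsupp,
    htsupp.trans hLU, fun p hp => hf1.self_of_nhdsSet p hp⟩

section NonstationaryPhase

variable {E F ι : Type*} [NormedAddCommGroup E] [NormedSpace ℝ E]
  [MeasurableSpace E] [BorelSpace E] [NormedAddCommGroup F] [NormedSpace ℝ F]

theorem integrable_smul_oscFactor (ν : Measure E) [IsFiniteMeasureOnCompacts ν]
    (B : F →L[ℝ] E →L[ℝ] ℝ) (R : ℝ) (A : F) {h : E → ℝ} (hh : Continuous h)
    (hc : HasCompactSupport h) : Integrable (fun g => h g • oscFactor B R A g) ν := by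
  have hcont : Continuous fun g => h g • oscFactor B R A g :=
    hh.smul (contDiff_oscFactor B R A (n := 1)).continuous
  have hsupp : HasCompactSupport fun g => h g • oscFactor B R A g :=
    hc.mono fun g hg h0 => hg (by simp [show h g = 0 from h0])
  exact hcont.integrable_of_hasCompactSupport hsupp

/-- Integration by parts against the oscillating factor along a nilpotent linear vector field. -/
theorem integral_fderiv_smul_oscFactor [FiniteDimensional ℝ E]
    (ν : Measure E) [IsFiniteMeasureOnCompacts ν] (T : E →L[ℝ] E) (hT : ∀ g, T (T g) = 0)
    (hinv : ∀ t : ℝ, ν.map (fun g => g + t • T g) = ν)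
    (B : F →L[ℝ] E →L[ℝ] ℝ) {v : E → ℝ} (hv : ContDiff ℝ 1 v) (hvc : HasCompactSupport v)
    (R : ℝ) (A : F) :
    ∫ g, fderiv ℝ v g (T g) • oscFactor B R A g ∂ν
      = ((2 * Real.pi * R : ℝ) * Complex.I) *
        ∫ g, (B A (T g) * v g) • oscFactor B R A g ∂ν := by
  have hosc := contDiff_oscFactor B R A (n := 1)
  have h0 := integral_fderiv_apply_eq_zero_of_measurePreserving ν T hT hinv
    (f := fun g => v g • oscFactor B R A g) (hv.smul hosc) hvc.smul_right
  have hderiv : ∀ g, fderiv ℝ (fun g => v g • oscFactor B R A g) g (T g)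
      = fderiv ℝ v g (T g) • oscFactor B R A g
        - ((2 * Real.pi * R : ℝ) * Complex.I) * ((B A (T g) * v g) • oscFactor B R A g) := by
    intro g
    have := (hv.differentiable one_ne_zero g).hasFDerivAt.smul (hasFDerivAt_oscFactor B R A g)
    change fderiv ℝ (v • oscFactor B R A) g (T g) = _
    rw [this.fderiv]
    simp only [_root_.add_apply, _root_.smul_apply,
      ContinuousLinearMap.smulRight_apply, Complex.real_smul]
    push_cast
    ring
  have hi1 : Integrable (fun g => fderiv ℝ v g (T g) • oscFactor B R A g) ν :=
    integrable_smul_oscFactor ν B R A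
      ((hv.continuous_fderiv one_ne_zero).clm_apply T.continuous) (hvc.fderiv_apply_field T)
  have hi2 : Integrable (fun g => (B A (T g) * v g) • oscFactor B R A g) ν :=
    integrable_smul_oscFactor ν B R A (((B A).comp T).continuous.mul hv.continuous) hvc.mul_left
  simp_rw [hderiv] at h0
  rw [integral_sub hi1 (hi2.const_mul _), integral_const_mul] at h0
  exact sub_eq_zero.1 h0

/-- **Non-stationary phase**, uniformly in a parameter: if some derivative `B(A, T i g)` of the phase
is nonzero at each point of the support of the amplitude `u(A, g)`, then the oscillatory integral
decays rapidly. -/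
theorem exists_pow_mul_norm_integral_oscFactor_le [Fintype ι] [FiniteDimensional ℝ E]
    (ν : Measure E) [IsFiniteMeasureOnCompacts ν]
    (T : ι → E →L[ℝ] E) (hT : ∀ i g, T i (T i g) = 0)
    (hinv : ∀ i (t : ℝ), ν.map (fun g => g + t • T i g) = ν)
    (B : F →L[ℝ] E →L[ℝ] ℝ) (N : ℕ) {u : F × E → ℝ} (hu : ContDiff ℝ (⊤ : ℕ∞) u)
    (huc : HasCompactSupport u)
    (hne : ∀ p ∈ tsupport u, ∑ i, B p.1 (T i p.2) ^ 2 ≠ 0) :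
    ∃ C : ℝ, ∀ R : ℝ, 0 < R → ∀ A : F,
      R ^ N * ‖∫ g, u (A, g) • oscFactor B R A g ∂ν‖ ≤ C := by
  induction N generalizing u with
  | zero =>
    obtain ⟨C, hC⟩ := huc.exists_bound_of_continuous hu.continuous
    set S : Set E := Prod.snd '' tsupport u
    have hS : IsCompact S := huc.isCompact.image continuous_snd
    refine ⟨C * ν.real S, fun R _ A => ?_⟩
    rw [pow_zero, one_mul, ← setIntegral_eq_integral_of_forall_compl_eq_zero (s := S)]
    · refine norm_setIntegral_le_of_norm_le_const hS.measure_lt_top fun g _ => ?_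
      rw [norm_smul, norm_oscFactor, mul_one]
      exact hC _
    · intro g hg
      rw [image_eq_zero_of_notMem_tsupport fun h => hg ⟨_, h, rfl⟩, zero_smul]
  | succ N ih =>
    set a : ι → F × E → ℝ := fun i p => B p.1 (T i p.2)
    have ha : ∀ i, ContDiff ℝ (⊤ : ℕ∞) (a i) := fun i =>
      (B.contDiff.comp contDiff_fst).clm_apply ((T i).contDiff.comp contDiff_snd)
    set q : F × E → ℝ := fun p => ∑ i, a i p ^ 2
    have hq : ContDiff ℝ (⊤ : ℕ∞) q := ContDiff.sum fun i _ => (ha i).pow 2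
    set v : ι → F × E → ℝ := fun i p => a i p * (u p / q p)
    have hv : ∀ i, ContDiff ℝ (⊤ : ℕ∞) (v i) := fun i =>
      (ha i).mul (hu.div_of_ne_zero_on_tsupport hq hne)
    have hvsupp : ∀ i, Function.support (v i) ⊆ tsupport u := fun i p hp => by
      by_contra h
      exact hp (by simp [v, image_eq_zero_of_notMem_tsupport h])
    have hvt : ∀ i, tsupport (v i) ⊆ tsupport u := fun i =>
      closure_minimal (hvsupp i) (isClosed_tsupport u)
    have hvc : ∀ i, HasCompactSupport (v i) := fun i => huc.mono' (hvsupp i)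
    set w : F × E → ℝ := fun p => ∑ i, fderiv ℝ (v i) p (0, T i p.2)
    have hw : ContDiff ℝ (⊤ : ℕ∞) w := ContDiff.sum fun i _ =>
      ((hv i).fderiv_right (m := (⊤ : ℕ∞)) (by simp)).clm_apply
        (contDiff_const.prodMk ((T i).contDiff.comp contDiff_snd))
    have hwsupp : Function.support w ⊆ tsupport u := fun p hp => by
      by_contra h
      refine hp (Finset.sum_eq_zero fun i _ => ?_)
      have : fderiv ℝ (v i) p = 0 := by
        by_contra h0
        exact h (hvt i (support_fderiv_subset ℝ h0))
      simp [this]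
    have hwt : tsupport w ⊆ tsupport u := closure_minimal hwsupp (isClosed_tsupport u)
    have hwc : HasCompactSupport w := huc.mono' hwsupp
    obtain ⟨C, hC⟩ := ih hw hwc fun p hp => hne p (hwt hp)
    refine ⟨C, fun R hR A => ?_⟩
    have hslice : ∀ i, ContDiff ℝ (⊤ : ℕ∞) fun g => v i (A, g) := fun i =>
      (hv i).comp (contDiff_const.prodMk contDiff_id)
    have hfd : ∀ i g, fderiv ℝ (fun g => v i (A, g)) g (T i g)
        = fderiv ℝ (v i) (A, g) (0, T i g) := fun i g => by
      have h1 : HasFDerivAt (fun g : E => (A, g)) (ContinuousLinearMap.inr ℝ F E) g :=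
        hasFDerivAt_prodMk_right A g
      have h2 := ((hv i).differentiable (by simp) (A, g)).hasFDerivAt.comp g h1
      rw [show (fun g => v i (A, g)) = v i ∘ fun g => (A, g) from rfl, h2.fderiv]
      simp
    have hparts : ∫ g, w (A, g) • oscFactor B R A g ∂ν
        = ((2 * Real.pi * R : ℝ) * Complex.I) * ∫ g, u (A, g) • oscFactor B R A g ∂ν := by
      have h1 : ∀ i, ∫ g, fderiv ℝ (v i) (A, g) (0, T i g) • oscFactor B R A g ∂ν
          = ((2 * Real.pi * R : ℝ) * Complex.I) *
            ∫ g, (a i (A, g) * v i (A, g)) • oscFactor B R A g ∂ν := fun i => by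
        simp_rw [← hfd]
        exact integral_fderiv_smul_oscFactor ν (T i) (hT i) (hinv i) B
          ((hslice i).of_le (by simp)) ((hvc i).slice A) R A
      have hi1 : ∀ i, Integrable
          (fun g => fderiv ℝ (v i) (A, g) (0, T i g) • oscFactor B R A g) ν := fun i => by
        simp_rw [← hfd]
        exact integrable_smul_oscFactor ν B R A
          (((hslice i).continuous_fderiv (by simp)).clm_apply (T i).continuous)
          (((hvc i).slice A).fderiv_apply_field (T i))
      have hi2 : ∀ i, Integrable
          (fun g => (a i (A, g) * v i (A, g)) • oscFactor B R A g) ν := fun i =>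
        integrable_smul_oscFactor ν B R A
          (((B A).comp (T i)).continuous.mul (hslice i).continuous) ((hvc i).slice A).mul_left
      have hsum : ∀ g, u (A, g) = ∑ i, a i (A, g) * v i (A, g) := fun g => by
        have : ∑ i, a i (A, g) * v i (A, g) = q (A, g) * (u (A, g) / q (A, g)) := by
          simp only [v, q, Finset.sum_mul]
          exact Finset.sum_congr rfl fun i _ => by ring
        rw [this]
        by_cases hp : (A, g) ∈ tsupport u
        · exact (mul_div_cancel₀ _ (hne _ hp)).symm
        · simp [image_eq_zero_of_notMem_tsupport hp]
      simp_rw [hsum, w, Finset.sum_smul]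
      rw [integral_finsetSum _ fun i _ => hi1 i, integral_finsetSum _ fun i _ => hi2 i,
        Finset.mul_sum]
      exact Finset.sum_congr rfl fun i _ => h1 i
    have hnorm : ‖∫ g, w (A, g) • oscFactor B R A g ∂ν‖
        = 2 * Real.pi * R * ‖∫ g, u (A, g) • oscFactor B R A g ∂ν‖ := by
      rw [hparts, norm_mul, norm_mul, Complex.norm_I, mul_one, Complex.norm_real,
        Real.norm_of_nonneg (by positivity)]
    have hCR := hC R hR A
    rw [hnorm] at hCR
    refine le_trans ?_ hCR
    have h2pi : (1 : ℝ) ≤ 2 * Real.pi := by linarith [Real.pi_gt_three]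
    calc R ^ (N + 1) * ‖∫ g, u (A, g) • oscFactor B R A g ∂ν‖
        = 1 * (R ^ N * R * ‖∫ g, u (A, g) • oscFactor B R A g ∂ν‖) := by ring
      _ ≤ (2 * Real.pi) * (R ^ N * R * ‖∫ g, u (A, g) • oscFactor B R A g ∂ν‖) := by gcongr
      _ = _ := by ring

/-- **Non-stationary phase** for a fixed amplitude, uniformly over a compact set of phases without
critical points on the support of the amplitude. -/
theorem exists_pow_mul_norm_integral_oscFactor_le_of_isCompact [Fintype ι] [FiniteDimensional ℝ E]
    [FiniteDimensional ℝ F] (ν : Measure E) [IsFiniteMeasureOnCompacts ν]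
    (T : ι → E →L[ℝ] E) (hT : ∀ i g, T i (T i g) = 0)
    (hinv : ∀ i (t : ℝ), ν.map (fun g => g + t • T i g) = ν)
    (B : F →L[ℝ] E →L[ℝ] ℝ) {ψ : E → ℝ} (hψ : ContDiff ℝ (⊤ : ℕ∞) ψ)
    (hψc : HasCompactSupport ψ) {Z : Set E} (hZ : IsClosed Z) (hνZ : ∀ᵐ g ∂ν, g ∈ Z)
    {P : Set F} (hP : IsCompact P)
    (hne : ∀ A ∈ P, ∀ g ∈ Z, g ∈ tsupport ψ → ∃ i, B A (T i g) ≠ 0) (N : ℕ) :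
    ∃ C : ℝ, ∀ R : ℝ, 0 < R → ∀ A ∈ P,
      R ^ N * ‖∫ g, ψ g • oscFactor B R A g ∂ν‖ ≤ C := by
  set q : F × E → ℝ := fun p => ∑ i, B p.1 (T i p.2) ^ 2
  have hq : Continuous q := by fun_prop
  obtain ⟨χ, hχ, hχc, hχt, hχ1⟩ := exists_contDiff_hasCompactSupport_eq_one
    (K := P ×ˢ (tsupport ψ ∩ Z)) (U := {p | q p ≠ 0})
    (hP.prod (hψc.isCompact.inter_right hZ)) (isOpen_ne_fun hq continuous_const) (by
      rintro ⟨A, g⟩ ⟨hA, hg, hgZ⟩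
      obtain ⟨i, hi⟩ := hne A hA g hgZ hg
      exact (Finset.sum_pos' (fun j _ => sq_nonneg _) ⟨i, Finset.mem_univ i, by positivity⟩).ne')
  have hu : ContDiff ℝ (⊤ : ℕ∞) fun p : F × E => χ p * ψ p.2 := hχ.mul (hψ.comp contDiff_snd)
  obtain ⟨C, hC⟩ := exists_pow_mul_norm_integral_oscFactor_le ν T hT hinv B N hu hχc.mul_right
    fun p hp => hχt (tsupport_mul_subset_left hp)
  refine ⟨C, fun R hR A hA => ?_⟩
  rw [integral_congr_ae (g := fun g => (χ (A, g) * ψ g) • oscFactor B R A g)]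
  · exact hC R hR A
  · filter_upwards [hνZ] with g hg
    by_cases hgψ : g ∈ tsupport ψ
    · rw [hχ1 (A, g) ⟨hA, hgψ, hg⟩, one_mul]
    · simp [image_eq_zero_of_notMem_tsupport hgψ]

end NonstationaryPhase

theorem sFinite_of_isFiniteMeasureOnCompacts {E : Type*} [NormedAddCommGroup E] [NormedSpace ℝ E]
    [FiniteDimensional ℝ E] [MeasurableSpace E] (ν : Measure E)
    [IsFiniteMeasureOnCompacts ν] : SFinite ν := by
  have : ProperSpace E := FiniteDimensional.proper_real E
  infer_instance

/-- A basis of the trace-zero matrices consisting of nilpotent matrices. -/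
def nilpotentBasis : Fin 3 → Matrix (Fin 2) (Fin 2) ℝ :=
  ![!![0, 1; 0, 0], !![0, 0; 1, 0], !![1, -1; 1, -1]]

theorem nilpotentBasis_mul_self (i : Fin 3) : nilpotentBasis i * nilpotentBasis i = 0 := by
  fin_cases i <;> ext a b <;> fin_cases a <;> fin_cases b <;>
    simp [nilpotentBasis, Matrix.mul_apply, Fin.sum_univ_two]

theorem det_one_add_smul_nilpotentBasis (i : Fin 3) (t : ℝ) :
    (1 + t • nilpotentBasis i).det = 1 := by
  fin_cases i <;> simp [nilpotentBasis, Matrix.det_fin_two]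
  ring

/-- The left-invariant vector fields `g ↦ g X` attached to `nilpotentBasis`. -/
noncomputable def nilpotentField (i : Fin 3) :
    Matrix (Fin 2) (Fin 2) ℝ →L[ℝ] Matrix (Fin 2) (Fin 2) ℝ :=
  LinearMap.toContinuousLinearMap (LinearMap.mulRight ℝ (nilpotentBasis i))

theorem nilpotentField_apply (i : Fin 3) (g : Matrix (Fin 2) (Fin 2) ℝ) :
    nilpotentField i g = g * nilpotentBasis i := rfl

/-- The trace pairing `(A, g) ↦ tr (g A)` as a continuous bilinear map. -/
noncomputable def tracePairing :
    Matrix (Fin 2) (Fin 2) ℝ →L[ℝ] Matrix (Fin 2) (Fin 2) ℝ →L[ℝ] ℝ :=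
  LinearMap.toContinuousLinearMap
    ((LinearMap.toContinuousLinearMap :
        (Matrix (Fin 2) (Fin 2) ℝ →ₗ[ℝ] ℝ) ≃ₗ[ℝ] _).toLinearMap ∘ₗ
      LinearMap.mk₂ ℝ (fun A g : Matrix (Fin 2) (Fin 2) ℝ => (g * A).trace)
        (fun _ _ _ => by simp [mul_add]) (fun _ _ _ => by simp)
        (fun _ _ _ => by simp [add_mul]) (fun _ _ _ => by simp))

theorem tracePairing_apply (A g : Matrix (Fin 2) (Fin 2) ℝ) :
    tracePairing A g = (g * A).trace := rfl

/-- At a critical point `g ∈ SL₂(ℝ)` of the phase `tr (g A)` one has `A = c g⁻¹` for a scalar `c`,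
so that `‖A‖² ≤ ‖g‖² |det A|`. -/
theorem norm_sq_le_of_tracePairing_eq_zero {A g : Matrix (Fin 2) (Fin 2) ℝ} (hg : g.det = 1)
    (h : ∀ i, tracePairing A (nilpotentField i g) = 0) :
    ‖A‖ ^ 2 ≤ ‖g‖ ^ 2 * |A.det| := by
  have h0 := h 0
  have h1 := h 1
  have h2 := h 2
  simp only [tracePairing_apply, nilpotentField_apply, nilpotentBasis, Matrix.trace_fin_two,
    Matrix.mul_apply, Fin.sum_univ_two] at h0 h1 h2
  simp at h0 h1 h2
  rw [Matrix.det_fin_two] at hg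
  set c := A 0 0 * g 0 0 + A 0 1 * g 1 0 with hc
  have hd : A 1 0 * g 0 1 + A 1 1 * g 1 1 = c := by linarith
  have e00 : A 0 0 = c * g 1 1 := by
    linear_combination (-A 0 0) * hg + g 1 1 * hc - g 1 0 * h1
  have e01 : A 0 1 = - (c * g 0 1) := by
    linear_combination (-A 0 1) * hg + g 0 0 * h1
  have e10 : A 1 0 = - (c * g 1 0) := by
    linear_combination (-A 1 0) * hg + g 1 1 * h0 - g 1 0 * hd
  have e11 : A 1 1 = c * g 0 0 := by
    linear_combination (-A 1 1) * hg - g 0 1 * h0 + g 0 0 * hd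
  have hdet : A.det = c ^ 2 := by
    rw [Matrix.det_fin_two, e00, e01, e10, e11]
    linear_combination c ^ 2 * hg
  have hent : ∀ i j, |g i j| ≤ ‖g‖ := fun i j => Matrix.norm_entry_le_entrywise_sup_norm g
  have hle : ‖A‖ ≤ |c| * ‖g‖ := by
    rw [Matrix.norm_le_iff (by positivity)]
    intro i j
    fin_cases i <;> fin_cases j <;>
      simp only [Fin.zero_eta, Fin.mk_one, e00, e01, e10, e11, Real.norm_eq_abs, abs_neg, abs_mul] <;>
      exact mul_le_mul_of_nonneg_left (hent _ _) (abs_nonneg c)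
  calc ‖A‖ ^ 2 ≤ (|c| * ‖g‖) ^ 2 := by gcongr
    _ = ‖g‖ ^ 2 * |A.det| := by rw [hdet, abs_of_nonneg (sq_nonneg c), mul_pow, sq_abs]; ring

/-- The matrix `ξ xᵀ + η yᵀ`. -/
def pairMatrix (ξ η x y : EuclideanSpace ℝ (Fin 2)) : Matrix (Fin 2) (Fin 2) ℝ :=
  Matrix.of fun i j => ξ i * x j + η i * y j

theorem pairMatrix_apply (ξ η x y : EuclideanSpace ℝ (Fin 2)) (i j : Fin 2) :
    pairMatrix ξ η x y i j = ξ i * x j + η i * y j := rfl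

theorem det_pairMatrix (ξ η x y : EuclideanSpace ℝ (Fin 2)) :
    (pairMatrix ξ η x y).det = (ξ 0 * η 1 - ξ 1 * η 0) * (x 0 * y 1 - x 1 * y 0) := by
  rw [Matrix.det_fin_two]
  simp only [pairMatrix_apply]
  ring

theorem tracePairing_pairMatrix (ξ η x y : EuclideanSpace ℝ (Fin 2))
    (g : Matrix (Fin 2) (Fin 2) ℝ) :
    tracePairing (pairMatrix ξ η x y) g
      = ⟪x, Matrix.toEuclideanLin g ξ⟫ + ⟪y, Matrix.toEuclideanLin g η⟫ := by
  simp only [tracePairing_apply, Matrix.trace_fin_two, Matrix.mul_apply, Fin.sum_univ_two,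
    pairMatrix_apply, PiLp.inner_apply, Matrix.toLpLin_apply, Matrix.mulVec, dotProduct,
    RCLike.inner_apply, conj_trivial]
  ring

theorem oscFactor_pairMatrix {R : ℝ} (hR : R ≠ 0) (ξ η x y : EuclideanSpace ℝ (Fin 2))
    (g : Matrix (Fin 2) (Fin 2) ℝ) :
    oscFactor tracePairing R (R⁻¹ • pairMatrix ξ η x y) g
      = Complex.exp (((-2 * Real.pi * ⟪x, Matrix.toEuclideanLin g ξ⟫ : ℝ) : ℂ) * Complex.I)
        * Complex.exp (((-2 * Real.pi * ⟪y, Matrix.toEuclideanLin g η⟫ : ℝ) : ℂ)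
          * Complex.I) := by
  change Complex.exp (((-2 * Real.pi * (R * (g * (R⁻¹ • pairMatrix ξ η x y)).trace) : ℝ) : ℂ)
    * Complex.I) = _
  rw [← Complex.exp_add, Matrix.mul_smul, Matrix.trace_smul, smul_eq_mul,
    mul_inv_cancel_left₀ hR, ← tracePairing_apply, tracePairing_pairMatrix]
  congr 1
  push_cast
  ring

theorem abs_apply_le_norm (x : EuclideanSpace ℝ (Fin 2)) (i : Fin 2) : |x i| ≤ ‖x‖ :=
  PiLp.norm_apply_le x i

theorem norm_le_abs_add_abs (x : EuclideanSpace ℝ (Fin 2)) : ‖x‖ ≤ |x 0| + |x 1| := by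
  rw [EuclideanSpace.norm_eq, Fin.sum_univ_two, Real.norm_eq_abs, Real.norm_eq_abs]
  refine Real.sqrt_le_iff.2 ⟨by positivity, ?_⟩
  nlinarith [abs_nonneg (x 0), abs_nonneg (x 1)]

theorem abs_wedge_le_norm_mul_norm (x y : EuclideanSpace ℝ (Fin 2)) :
    |x 0 * y 1 - x 1 * y 0| ≤ ‖x‖ * ‖y‖ := by
  refine abs_le_of_sq_le_sq ?_ (by positivity)
  rw [mul_pow, EuclideanSpace.real_norm_sq_eq, EuclideanSpace.real_norm_sq_eq, Fin.sum_univ_two,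
    Fin.sum_univ_two]
  nlinarith [sq_nonneg (x 0 * y 0 + x 1 * y 1)]

theorem norm_pairMatrix_le {ξ η x y : EuclideanSpace ℝ (Fin 2)} {C₀ R : ℝ} (hC₀ : 0 ≤ C₀)
    (hR : 0 ≤ R) (hx : ‖x‖ ≤ C₀) (hy : ‖y‖ ≤ C₀) (hξ : ‖ξ‖ ≤ R) (hη : ‖η‖ ≤ R) :
    ‖pairMatrix ξ η x y‖ ≤ 2 * C₀ * R := by
  rw [Matrix.norm_le_iff (by positivity)]
  intro i j
  rw [pairMatrix_apply, Real.norm_eq_abs]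
  have h1 : |ξ i * x j| ≤ R * C₀ := by
    rw [abs_mul]
    exact mul_le_mul ((abs_apply_le_norm ξ i).trans hξ) ((abs_apply_le_norm x j).trans hx)
      (abs_nonneg _) hR
  have h2 : |η i * y j| ≤ R * C₀ := by
    rw [abs_mul]
    exact mul_le_mul ((abs_apply_le_norm η i).trans hη) ((abs_apply_le_norm y j).trans hy)
      (abs_nonneg _) hR
  linarith [abs_add_le (ξ i * x j) (η i * y j)]

theorem max_norm_le_norm_pairMatrix {ξ η x y : EuclideanSpace ℝ (Fin 2)} {c₀ C₀ : ℝ}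
    (hx : ‖x‖ ≤ C₀) (hy : ‖y‖ ≤ C₀) (hxy : c₀ ≤ |x 0 * y 1 - x 1 * y 0|) :
    c₀ * max ‖ξ‖ ‖η‖ ≤ 4 * C₀ * ‖pairMatrix ξ η x y‖ := by
  set A := pairMatrix ξ η x y with hA
  have hent : ∀ i j, |A i j| ≤ ‖A‖ := fun i j => Matrix.norm_entry_le_entrywise_sup_norm A
  have hbound : ∀ (z : EuclideanSpace ℝ (Fin 2)) (i : Fin 2), ‖z‖ ≤ C₀ →
      |A i 0 * z 1 - A i 1 * z 0| ≤ 2 * C₀ * ‖A‖ := by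
    intro z i hz
    have h1 : |A i 0 * z 1| ≤ ‖A‖ * C₀ := by
      rw [abs_mul]
      exact mul_le_mul (hent _ _) ((abs_apply_le_norm z 1).trans hz) (abs_nonneg _) (norm_nonneg _)
    have h2 : |A i 1 * z 0| ≤ ‖A‖ * C₀ := by
      rw [abs_mul]
      exact mul_le_mul (hent _ _) ((abs_apply_le_norm z 0).trans hz) (abs_nonneg _) (norm_nonneg _)
    linarith [abs_sub (A i 0 * z 1) (A i 1 * z 0)]
  have hξ : ∀ i, c₀ * |ξ i| ≤ 2 * C₀ * ‖A‖ := by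
    intro i
    refine le_trans ?_ (hbound y i hy)
    have : A i 0 * y 1 - A i 1 * y 0 = (x 0 * y 1 - x 1 * y 0) * ξ i := by
      simp only [hA, pairMatrix_apply]
      ring
    rw [this, abs_mul]
    gcongr
  have hη : ∀ i, c₀ * |η i| ≤ 2 * C₀ * ‖A‖ := by
    intro i
    refine le_trans ?_ (hbound x i hx)
    have : A i 0 * x 1 - A i 1 * x 0 = -((x 0 * y 1 - x 1 * y 0) * η i) := by
      simp only [hA, pairMatrix_apply]
      ring
    rw [this, abs_neg, abs_mul]
    gcongr
  rcases le_or_gt c₀ 0 with hc | hc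
  · have hC : 0 ≤ C₀ := (norm_nonneg x).trans hx
    exact (mul_nonpos_of_nonpos_of_nonneg hc (by positivity)).trans (by positivity)
  rcases max_choice ‖ξ‖ ‖η‖ with h | h <;> rw [h]
  · nlinarith [norm_le_abs_add_abs ξ, hξ 0, hξ 1]
  · nlinarith [norm_le_abs_add_abs η, hη 0, hη 1]

section PushforwardToMatrices

variable (lam : Measure (Matrix.SpecialLinearGroup (Fin 2) ℝ))

theorem isClosed_det_eq_one : IsClosed {A : Matrix (Fin 2) (Fin 2) ℝ | A.det = 1} :=
  isClosed_eq (Continuous.matrix_det continuous_id) continuous_const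

theorem measurableEmbedding_coe_SL2 : MeasurableEmbedding
    (fun g : Matrix.SpecialLinearGroup (Fin 2) ℝ => (g : Matrix (Fin 2) (Fin 2) ℝ)) :=
  MeasurableEmbedding.subtype_coe isClosed_det_eq_one.measurableSet

theorem isFiniteMeasureOnCompacts_map_coe_SL2 [IsFiniteMeasureOnCompacts lam] :
    IsFiniteMeasureOnCompacts
      (lam.map fun g : Matrix.SpecialLinearGroup (Fin 2) ℝ => (g : Matrix (Fin 2) (Fin 2) ℝ)) := by
  refine ⟨fun K hK => ?_⟩
  rw [measurableEmbedding_coe_SL2.map_apply]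
  have hpre : IsCompact ((fun g : Matrix.SpecialLinearGroup (Fin 2) ℝ =>
      (g : Matrix (Fin 2) (Fin 2) ℝ)) ⁻¹' K) :=
    isClosed_det_eq_one.isClosedEmbedding_subtypeVal.isCompact_preimage hK
  exact hpre.measure_lt_top

theorem ae_det_eq_one_map_coe_SL2 :
    ∀ᵐ g ∂(lam.map fun g : Matrix.SpecialLinearGroup (Fin 2) ℝ =>
      (g : Matrix (Fin 2) (Fin 2) ℝ)), g ∈ {A : Matrix (Fin 2) (Fin 2) ℝ | A.det = 1} := by
  rw [measurableEmbedding_coe_SL2.ae_map_iff]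
  exact Filter.Eventually.of_forall fun g => g.2

theorem map_add_nilpotentField_map_coe_SL2
    (hinv : ∀ g₀ : Matrix.SpecialLinearGroup (Fin 2) ℝ, lam.map (fun g => g * g₀) = lam)
    (i : Fin 3) (t : ℝ) :
    (lam.map fun g : Matrix.SpecialLinearGroup (Fin 2) ℝ =>
        (g : Matrix (Fin 2) (Fin 2) ℝ)).map (fun g => g + t • nilpotentField i g)
      = lam.map fun g : Matrix.SpecialLinearGroup (Fin 2) ℝ =>
        (g : Matrix (Fin 2) (Fin 2) ℝ) := by
  have hcoe := measurableEmbedding_coe_SL2.measurable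
  set g₀ : Matrix.SpecialLinearGroup (Fin 2) ℝ :=
    ⟨1 + t • nilpotentBasis i, det_one_add_smul_nilpotentBasis i t⟩
  have hflow : Measurable fun g : Matrix (Fin 2) (Fin 2) ℝ => g + t • nilpotentField i g :=
    Continuous.measurable (by fun_prop)
  have hcomp : ∀ g : Matrix.SpecialLinearGroup (Fin 2) ℝ,
      (g : Matrix (Fin 2) (Fin 2) ℝ) + t • nilpotentField i (g : Matrix (Fin 2) (Fin 2) ℝ)
        = ((g * g₀ : Matrix.SpecialLinearGroup (Fin 2) ℝ) : Matrix (Fin 2) (Fin 2) ℝ) := by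
    intro g
    rw [Matrix.SpecialLinearGroup.coe_mul, nilpotentField_apply]
    simp [g₀, mul_add]
  have hmul : Measurable fun g : Matrix.SpecialLinearGroup (Fin 2) ℝ => g * g₀ := by
    refine measurableEmbedding_coe_SL2.measurable_comp_iff.1 ?_
    convert hflow.comp hcoe using 1
    funext g
    exact (hcomp g).symm
  rw [Measure.map_map hflow hcoe]
  conv_rhs => rw [← hinv g₀, Measure.map_map hcoe hmul]
  congr 1
  funext g
  exact hcomp g

end PushforwardToMatrices

/-- The oscillatory integral of a product of Fourier transforms as an average of oscillatory
integrals with phases `tr (g A)`. -/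
theorem integral_measureFT_mul_measureFT (μ₁ μ₂ : Measure (EuclideanSpace ℝ (Fin 2)))
    [IsProbabilityMeasure μ₁] [IsProbabilityMeasure μ₂]
    (ν : Measure (Matrix (Fin 2) (Fin 2) ℝ)) [IsFiniteMeasureOnCompacts ν]
    {ψ : Matrix (Fin 2) (Fin 2) ℝ → ℝ} (hψ : Continuous ψ) (hψc : HasCompactSupport ψ)
    (ξ η : EuclideanSpace ℝ (Fin 2)) {R : ℝ} (hR : R ≠ 0) :
    ∫ g, measureFT μ₁ (Matrix.toEuclideanLin g ξ) * measureFT μ₂ (Matrix.toEuclideanLin g η)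
        * (ψ g : ℂ) ∂ν
      = ∫ p, ∫ g, ψ g • oscFactor tracePairing R (R⁻¹ • pairMatrix ξ η p.1 p.2) g ∂ν
        ∂(μ₁.prod μ₂) := by
  have hpt : ∀ g, measureFT μ₁ (Matrix.toEuclideanLin g ξ)
      * measureFT μ₂ (Matrix.toEuclideanLin g η) * (ψ g : ℂ)
      = ∫ p, ψ g • oscFactor tracePairing R (R⁻¹ • pairMatrix ξ η p.1 p.2) g
          ∂(μ₁.prod μ₂) := by
    intro g
    rw [measureFT, measureFT, ← integral_prod_mul, ← integral_mul_const]
    congr 1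
    funext p
    rw [oscFactor_pairMatrix hR, Complex.real_smul, mul_comm]
  simp_rw [hpt]
  have hmat : Continuous fun p : EuclideanSpace ℝ (Fin 2) × EuclideanSpace ℝ (Fin 2) =>
      pairMatrix ξ η p.1 p.2 :=
    continuous_matrix fun i j => by
      simp only [pairMatrix_apply]
      fun_prop
  have hcont : Continuous fun z : Matrix (Fin 2) (Fin 2) ℝ ×
      (EuclideanSpace ℝ (Fin 2) × EuclideanSpace ℝ (Fin 2)) =>
      ψ z.1 • oscFactor tracePairing R (R⁻¹ • pairMatrix ξ η z.2.1 z.2.2) z.1 := by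
    have h1 : Continuous fun z : Matrix (Fin 2) (Fin 2) ℝ ×
        (EuclideanSpace ℝ (Fin 2) × EuclideanSpace ℝ (Fin 2)) =>
        tracePairing (R⁻¹ • pairMatrix ξ η z.2.1 z.2.2) z.1 :=
      (tracePairing.continuous.comp ((hmat.comp continuous_snd).const_smul R⁻¹)).clm_apply
        continuous_fst
    unfold oscFactor
    fun_prop
  have : SFinite ν :=
    @sFinite_of_isFiniteMeasureOnCompacts _ _ _ inferInstance _ ν ‹_›
  refine integral_integral_swap ?_
  have hdom : Integrable (fun z : Matrix (Fin 2) (Fin 2) ℝ ×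
      (EuclideanSpace ℝ (Fin 2) × EuclideanSpace ℝ (Fin 2)) => ψ z.1 * (1 : ℝ))
      (ν.prod (μ₁.prod μ₂)) :=
    (hψ.integrable_of_hasCompactSupport hψc).mul_prod (integrable_const 1)
  refine hdom.mono hcont.aestronglyMeasurable (Filter.Eventually.of_forall fun z => ?_)
  rw [Function.uncurry, norm_smul, mul_one]
  exact mul_le_of_le_one_right (norm_nonneg _) (norm_oscFactor _ _ _ _).le

/-- **Non-stationary phase estimate on `SL₂(ℝ)`** (Lemma 5.1 of "Group actions, the
Mattila integral and applications"): if `μ₁, μ₂` are compactly supported probability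
measures on `ℝ²` with `c₀ ≤ |x|, |y|, |x·y^⊥| ≤ C₀` on their supports, `ψ` is a smooth
compactly supported function and `λ` a right Haar measure on `SL₂(ℝ)`, then there is
`K ≥ 1` such that for every `N` there is `C_N` with
`|∫_{SL₂(ℝ)} μ̂₁(gξ) μ̂₂(gη) ψ(g) dλ(g)| ≤ C_N max(|ξ|,|η|)^{-N}`
unless `|ξ| ≈_K |η|` and `|ξ·η^⊥| ≳_K max(|ξ|,|η|)²`. -/
theorem sl2_oscillatory_integral_rapid_decay
    (μ₁ μ₂ : Measure (EuclideanSpace ℝ (Fin 2)))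
    [IsProbabilityMeasure μ₁] [IsProbabilityMeasure μ₂]
    (S₁ S₂ : Set (EuclideanSpace ℝ (Fin 2)))
    (hS₁ : IsCompact S₁) (hS₂ : IsCompact S₂)
    (hμ₁S : μ₁ S₁ᶜ = 0) (hμ₂S : μ₂ S₂ᶜ = 0)
    (c₀ C₀ : ℝ) (hc₀ : 0 < c₀) (hC₀ : c₀ < C₀)
    (hgeom : ∀ x ∈ S₁, ∀ y ∈ S₂,
      c₀ ≤ ‖x‖ ∧ ‖x‖ ≤ C₀ ∧ c₀ ≤ ‖y‖ ∧ ‖y‖ ≤ C₀ ∧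
      c₀ ≤ |x 0 * y 1 - x 1 * y 0| ∧ |x 0 * y 1 - x 1 * y 0| ≤ C₀)
    (ψ : Matrix (Fin 2) (Fin 2) ℝ → ℝ) (hψ : ContDiff ℝ (⊤ : ℕ∞) ψ)
    (hψc : HasCompactSupport ψ)
    (lam : Measure (Matrix.SpecialLinearGroup (Fin 2) ℝ)) (hlam0 : lam ≠ 0)
    (hlamfin : IsFiniteMeasureOnCompacts lam)
    (hinv : ∀ g₀ : Matrix.SpecialLinearGroup (Fin 2) ℝ,
      lam.map (fun g => g * g₀) = lam) :
    ∃ K : ℝ, 1 ≤ K ∧ ∀ N : ℕ, ∃ C : ℝ, 0 < C ∧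
      ∀ ξ η : EuclideanSpace ℝ (Fin 2), 1 ≤ max ‖ξ‖ ‖η‖ →
        ¬(K⁻¹ * ‖η‖ ≤ ‖ξ‖ ∧ ‖ξ‖ ≤ K * ‖η‖ ∧
          K⁻¹ * max ‖ξ‖ ‖η‖ ^ 2 ≤ |ξ 0 * η 1 - ξ 1 * η 0|) →
        ‖∫ g : Matrix.SpecialLinearGroup (Fin 2) ℝ,
            measureFT μ₁ (Matrix.toEuclideanLin ((g : Matrix (Fin 2) (Fin 2) ℝ)) ξ)
              * measureFT μ₂ (Matrix.toEuclideanLin ((g : Matrix (Fin 2) (Fin 2) ℝ)) η)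
              * (ψ (g : Matrix (Fin 2) (Fin 2) ℝ) : ℂ) ∂lam‖
          ≤ C * max ‖ξ‖ ‖η‖ ^ (-(N : ℝ)) := by
  set ν : Measure (Matrix (Fin 2) (Fin 2) ℝ) :=
    lam.map fun g : Matrix.SpecialLinearGroup (Fin 2) ℝ => (g : Matrix (Fin 2) (Fin 2) ℝ) with hν
  have hνfin : IsFiniteMeasureOnCompacts ν := isFiniteMeasureOnCompacts_map_coe_SL2 lam
  have hC₀pos : 0 < C₀ := hc₀.trans hC₀
  obtain ⟨G, hG⟩ := hψc.isCompact.isBounded.exists_norm_le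
  set m : ℝ := c₀ / (4 * C₀) with hm
  have hmpos : 0 < m := by positivity
  set K : ℝ := G ^ 2 * C₀ / m ^ 2 + 1 with hK
  have hK1 : 1 ≤ K := by
    rw [hK]
    linarith [show 0 ≤ G ^ 2 * C₀ / m ^ 2 by positivity]
  have hKpos : 0 < K := by linarith
  set P : Set (Matrix (Fin 2) (Fin 2) ℝ) :=
    {A | m ≤ ‖A‖} ∩ {A | |A.det| ≤ C₀ / K} ∩ closedBall 0 (2 * C₀)
  have hdetcont : Continuous fun A : Matrix (Fin 2) (Fin 2) ℝ => A.det :=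
    Continuous.matrix_det continuous_id
  have hPc : IsCompact P := by
    have : ProperSpace (Matrix (Fin 2) (Fin 2) ℝ) := FiniteDimensional.proper_real _
    exact (isCompact_closedBall _ _).inter_left
      ((isClosed_le continuous_const continuous_norm).inter
        (isClosed_le hdetcont.abs continuous_const))
  have hne : ∀ A ∈ P, ∀ g ∈ {A : Matrix (Fin 2) (Fin 2) ℝ | A.det = 1}, g ∈ tsupport ψ →
      ∃ i, tracePairing A (nilpotentField i g) ≠ 0 := by
    rintro A ⟨⟨hA1, hA2⟩, -⟩ g hg hgψ
    by_contra! hcrit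
    have h1 := norm_sq_le_of_tracePairing_eq_zero hg hcrit
    have h2 : m ^ 2 ≤ G ^ 2 * (C₀ / K) :=
      calc m ^ 2 ≤ ‖A‖ ^ 2 := by
            have : m ≤ ‖A‖ := hA1
            gcongr
        _ ≤ ‖g‖ ^ 2 * |A.det| := h1
        _ ≤ G ^ 2 * (C₀ / K) := by
            have : |A.det| ≤ C₀ / K := hA2
            have := hG g hgψ
            gcongr
    rw [← mul_div_assoc, le_div_iff₀ hKpos, hK, mul_add, mul_one,
      mul_div_cancel₀ _ (by positivity)] at h2
    linarith [show 0 < m ^ 2 by positivity]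
  refine ⟨K, hK1, fun N => ?_⟩
  have hnil : ∀ i g, nilpotentField i (nilpotentField i g) = 0 := fun i g => by
    rw [nilpotentField_apply, nilpotentField_apply, mul_assoc, nilpotentBasis_mul_self, mul_zero]
  obtain ⟨C, hC⟩ := @exists_pow_mul_norm_integral_oscFactor_le_of_isCompact
    (Matrix (Fin 2) (Fin 2) ℝ) (Matrix (Fin 2) (Fin 2) ℝ) (Fin 3) _ _ _ (matrixBorelSpace _ _) _ _ _
    inferInstance inferInstance ν hνfin nilpotentField hnil
    (map_add_nilpotentField_map_coe_SL2 lam hinv) tracePairing ψ hψ hψc _ isClosed_det_eq_one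
    (ae_det_eq_one_map_coe_SL2 lam) P hPc hne N
  refine ⟨max C 1, by positivity, fun ξ η hmax hcond => ?_⟩
  set R : ℝ := max ‖ξ‖ ‖η‖ with hR
  have hRpos : 0 < R := by linarith
  have hdet : |ξ 0 * η 1 - ξ 1 * η 0| ≤ K⁻¹ * R ^ 2 := by
    have hwedge := abs_wedge_le_norm_mul_norm ξ η
    have hξR : ‖ξ‖ ≤ R := le_max_left _ _
    have hηR : ‖η‖ ≤ R := le_max_right _ _
    have hKinv : 0 < K⁻¹ := by positivity
    by_contra! hlt
    refine hcond ⟨?_, ?_, hlt.le⟩ <;> by_contra! h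
    · have : ‖ξ‖ * ‖η‖ ≤ K⁻¹ * R * R := by gcongr; exact h.le.trans (by gcongr)
      nlinarith
    · rw [mul_comm, ← lt_div_iff₀ hKpos, div_eq_inv_mul] at h
      have : ‖ξ‖ * ‖η‖ ≤ R * (K⁻¹ * R) := by gcongr; exact h.le.trans (by gcongr)
      nlinarith
  have hmem : ∀ x ∈ S₁, ∀ y ∈ S₂, R⁻¹ • pairMatrix ξ η x y ∈ P := by
    intro x hx y hy
    obtain ⟨-, hx2, -, hy2, hxy1, hxy2⟩ := hgeom x hx y hy
    have hnorm : ‖R⁻¹ • pairMatrix ξ η x y‖ = R⁻¹ * ‖pairMatrix ξ η x y‖ := by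
      rw [norm_smul, Real.norm_of_nonneg (by positivity)]
    refine ⟨⟨?_, ?_⟩, ?_⟩
    · change m ≤ ‖R⁻¹ • pairMatrix ξ η x y‖
      rw [hnorm, hm, inv_mul_eq_div, div_le_div_iff₀ (by positivity) hRpos]
      linarith [max_norm_le_norm_pairMatrix (ξ := ξ) (η := η) hx2 hy2 hxy1]
    · change |(R⁻¹ • pairMatrix ξ η x y).det| ≤ C₀ / K
      rw [Matrix.det_smul, det_pairMatrix, Fintype.card_fin, abs_mul, abs_mul,
        abs_of_nonneg (by positivity : 0 ≤ R⁻¹ ^ 2)]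
      calc R⁻¹ ^ 2 * (|ξ 0 * η 1 - ξ 1 * η 0| * |x 0 * y 1 - x 1 * y 0|)
          ≤ R⁻¹ ^ 2 * (K⁻¹ * R ^ 2 * C₀) := by gcongr
        _ = C₀ / K := by field_simp
    · rw [mem_closedBall_zero_iff, hnorm, inv_mul_le_iff₀ hRpos]
      linarith [norm_pairMatrix_le hC₀pos.le hRpos.le hx2 hy2 (le_max_left ‖ξ‖ ‖η‖)
        (le_max_right ‖ξ‖ ‖η‖)]
  have hae : ∀ᵐ p ∂(μ₁.prod μ₂), p.1 ∈ S₁ ∧ p.2 ∈ S₂ := by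
    have h1 : ∀ᵐ x ∂μ₁, x ∈ S₁ := hμ₁S
    have h2 : ∀ᵐ y ∂μ₂, y ∈ S₂ := hμ₂S
    exact (Measure.quasiMeasurePreserving_fst.ae h1).and
      (Measure.quasiMeasurePreserving_snd.ae h2)
  have hint := integral_measureFT_mul_measureFT μ₁ μ₂ ν hψ.continuous hψc ξ η hRpos.ne'
  rw [hν, measurableEmbedding_coe_SL2.integral_map] at hint
  rw [hint, Real.rpow_neg hRpos.le, Real.rpow_natCast, ← div_eq_mul_inv]
  have hbound := norm_integral_le_of_norm_le_const (μ := μ₁.prod μ₂) (C := max C 1 / R ^ N)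
    (f := fun p => ∫ g, ψ g • oscFactor tracePairing R (R⁻¹ • pairMatrix ξ η p.1 p.2) g ∂ν) (by
      filter_upwards [hae] with p hp
      rw [le_div_iff₀' (by positivity)]
      exact (hC R hRpos _ (hmem p.1 hp.1 p.2 hp.2)).trans (le_max_left _ _))
  simpa using hbound
end

section
/- Let μ_E, μ_F, μ_H be compactly supported Borel probability measures on ℝ² satisfying the Frostman conditions μ_E(B(x,r)) ≤ A r^{s_E}, μ_F(B(x,r)) ≤ A r^{s_F}, μ_H(B(x,r)) ≤ A r^{s_H} for all x ∈ ℝ² and r > 0, with 0 < s_E, s_F, s_H ≤ 2. Let ψ be a nonnegative continuous compactly supported function on SL₂(ℝ) and λ a right Haar measure on SL₂(ℝ). Then there is a constant C such that for every integer j ≥ 0, ∬_{2^j ≤ |ξ| ≤ 2^{j+1}, 2^j ≤ |η| ≤ 2^{j+1}} |μ̂_E(ξ)| |μ̂_F(η)| |μ̂_H(η)| ( ∫_{SL₂(ℝ)} |μ̂_E(gξ)| |μ̂_F(gη)| |μ̂_H(gη)| ψ(g) dλ(g) ) dξ dη ≤ C · 2^{j(4 − s_E − s_F − s_H)}. -/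
open MeasureTheory Metric
open scoped ENNReal RealInnerProductSpace

local notation "ℝ²" => EuclideanSpace ℝ (Fin 2)

theorem measureFT_eq_charFun (μ : Measure ℝ²) (ξ : ℝ²) :
    measureFT μ ξ = charFun μ ((-2 * Real.pi) • ξ) := by
  simp only [measureFT, charFun_apply, inner_smul_right]

theorem measurable_measureFT (μ : Measure ℝ²) [SFinite μ] : Measurable (measureFT μ) := by
  have : measureFT μ = fun ξ => charFun μ ((-2 * Real.pi) • ξ) :=
    funext (measureFT_eq_charFun μ)
  rw [this]
  exact measurable_charFun.comp (measurable_const_smul _)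

theorem norm_sq_measureFT (μ : Measure ℝ²) [IsFiniteMeasure μ] (ξ : ℝ²) :
    ((‖measureFT μ ξ‖ ^ 2 : ℝ) : ℂ) =
      ∫ p : ℝ² × ℝ², Complex.exp (((-2 * Real.pi * ⟪p.1 - p.2, ξ⟫ : ℝ) : ℂ) * Complex.I)
        ∂μ.prod μ := by
  rw [Complex.ofReal_pow, ← Complex.mul_conj']
  conv_lhs => rw [measureFT, ← integral_conj]
  rw [← integral_prod_mul]
  refine integral_congr_ae (.of_forall fun p => ?_)
  simp only
  rw [← Complex.exp_conj, ← Complex.exp_add, inner_sub_left]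
  congr 1
  simp only [map_mul, Complex.conj_ofReal, Complex.conj_I]
  push_cast
  ring

/-- Fourier inversion against a Gaussian of width `R`. -/
theorem integral_norm_sq_measureFT_mul_gaussian (μ : Measure ℝ²) [IsFiniteMeasure μ]
    {R : ℝ} (hR : 0 < R) :
    ∫ ξ, ‖measureFT μ ξ‖ ^ 2 * Real.exp (-(Real.pi / R ^ 2) * ‖ξ‖ ^ 2) =
      R ^ 2 * ∫ p : ℝ² × ℝ², Real.exp (-Real.pi * (R * ‖p.1 - p.2‖) ^ 2) ∂μ.prod μ := by
  have hb : 0 < Real.pi / R ^ 2 := by positivity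
  have hre : 0 < ((Real.pi / R ^ 2 : ℝ) : ℂ).re := by rwa [Complex.ofReal_re]
  have hπ : (Real.pi : ℂ) ≠ 0 := by exact_mod_cast Real.pi_ne_zero
  have hRc : (R : ℂ) ≠ 0 := by exact_mod_cast hR.ne'
  have hgauss : Integrable fun ξ : ℝ² => Real.exp (-(Real.pi / R ^ 2) * ‖ξ‖ ^ 2) := by
    have := (GaussianFourier.integrable_cexp_neg_mul_sq_norm_add hre 0 (0 : ℝ²)).norm
    refine this.congr (.of_forall fun ξ => ?_)
    simp only [Complex.norm_exp]
    congr 1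
    simp [← Complex.ofReal_pow]
  apply Complex.ofReal_injective
  rw [← integral_complex_ofReal, Complex.ofReal_mul, ← integral_complex_ofReal]
  have hkernel : ∀ ξ : ℝ², ((‖measureFT μ ξ‖ ^ 2 * Real.exp (-(Real.pi / R ^ 2) * ‖ξ‖ ^ 2) : ℝ) : ℂ)
      = ∫ p : ℝ² × ℝ², Complex.exp (((-2 * Real.pi * ⟪p.1 - p.2, ξ⟫ : ℝ) : ℂ) * Complex.I) *
        ((Real.exp (-(Real.pi / R ^ 2) * ‖ξ‖ ^ 2) : ℝ) : ℂ) ∂μ.prod μ := by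
    intro ξ
    rw [integral_mul_const, Complex.ofReal_mul, norm_sq_measureFT]
  simp_rw [hkernel]
  rw [integral_integral_swap]
  · rw [← integral_const_mul]
    refine integral_congr_ae (.of_forall fun p => ?_)
    have h := GaussianFourier.integral_cexp_neg_mul_sq_norm_add hre
      (-2 * Real.pi * Complex.I) (p.1 - p.2)
    simp only
    refine Eq.trans (integral_congr_ae (.of_forall fun ξ => ?_)) (h.trans ?_)
    · simp only
      rw [Complex.ofReal_exp, ← Complex.exp_add]
      congr 1
      push_cast
      ring
    · have h1 : ((Module.finrank ℝ ℝ² : ℕ) : ℂ) / 2 = 1 := by simp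
      rw [h1, Complex.cpow_one, Complex.ofReal_exp]
      congr 1
      · push_cast; field_simp
      · congr 1
        push_cast
        field_simp
        rw [Complex.I_sq]
        ring
  · have hcont : Continuous (Function.uncurry fun (ξ : ℝ²) (p : ℝ² × ℝ²) =>
        Complex.exp (((-2 * Real.pi * ⟪p.1 - p.2, ξ⟫ : ℝ) : ℂ) * Complex.I) *
        ((Real.exp (-(Real.pi / R ^ 2) * ‖ξ‖ ^ 2) : ℝ) : ℂ)) := by
      simp only [Function.uncurry_def]
      fun_prop
    refine (hgauss.comp_fst (μ.prod μ)).mono hcont.aestronglyMeasurable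
      (.of_forall fun q => ?_)
    simp only [Function.uncurry_def, norm_mul, Complex.norm_exp_ofReal_mul_I, one_mul,
      Complex.norm_real]
    exact le_rfl

theorem exp_neg_pi_mul_sq_le_tsum {t : ℝ} (ht : 0 ≤ t) :
    ENNReal.ofReal (Real.exp (-Real.pi * t ^ 2)) ≤
      ∑' k : ℕ, ENNReal.ofReal (Real.exp (-k)) * Set.indicator (Set.Iic ((k : ℝ) + 1)) 1 t := by
  refine le_trans ?_ (ENNReal.le_tsum ⌊t⌋₊)
  rw [Set.indicator_of_mem (show t ∈ Set.Iic _ from (Nat.lt_floor_add_one t).le)]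
  simp only [Pi.one_apply, mul_one]
  refine ENNReal.ofReal_le_ofReal (Real.exp_le_exp.2 ?_)
  have h1 : (⌊t⌋₊ : ℝ) ≤ t := Nat.floor_le ht
  have hpi := Real.pi_gt_three
  rcases Nat.eq_zero_or_pos ⌊t⌋₊ with h | h
  · rw [h]; simp; positivity
  · have h2 : (1 : ℝ) ≤ ⌊t⌋₊ := by exact_mod_cast h
    nlinarith [sq_nonneg t]

/-- A Frostman measure of exponent `s` has mass `O(R^{-s})` against a Gaussian of width `1 / R`. -/
theorem exists_lintegral_gaussian_le_of_frostman {s A : ℝ} (hs2 : s ≤ 2) (hA : 0 < A)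
    (μ : Measure ℝ²)
    (hfrost : ∀ (x : ℝ²) (r : ℝ), 0 < r → μ (closedBall x r) ≤ ENNReal.ofReal (A * r ^ s)) :
    ∃ C : ℝ, 0 < C ∧ ∀ (R : ℝ), 0 < R → ∀ x : ℝ²,
      ∫⁻ y, ENNReal.ofReal (Real.exp (-Real.pi * (R * ‖x - y‖) ^ 2)) ∂μ ≤
        ENNReal.ofReal (C * R ^ (-s)) := by
  have hsum : Summable fun k : ℕ => Real.exp (-k) * ((k : ℝ) + 1) ^ 2 := by
    have h2 := Real.summable_pow_mul_exp_neg_nat_mul 2 one_pos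
    have h1 := Real.summable_pow_mul_exp_neg_nat_mul 1 one_pos
    have h0 := Real.summable_pow_mul_exp_neg_nat_mul 0 one_pos
    refine ((h2.add (h1.mul_left 2)).add h0).congr fun k => ?_
    simp only [neg_mul, one_mul]
    ring
  set S := ∑' k : ℕ, Real.exp (-k) * ((k : ℝ) + 1) ^ 2 with hS
  have hSpos : 0 < S := hsum.tsum_pos (fun k => by positivity) 0 (by simp)
  refine ⟨A * S, by positivity, fun R hR x => ?_⟩
  calc ∫⁻ y, ENNReal.ofReal (Real.exp (-Real.pi * (R * ‖x - y‖) ^ 2)) ∂μ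
      ≤ ∫⁻ y, ∑' k : ℕ, ENNReal.ofReal (Real.exp (-k)) *
          Set.indicator (closedBall x (((k : ℝ) + 1) / R)) 1 y ∂μ := by
        refine lintegral_mono fun y => (exp_neg_pi_mul_sq_le_tsum (by positivity)).trans_eq ?_
        refine tsum_congr fun k => ?_
        congr 1
        have : R * ‖x - y‖ ∈ Set.Iic ((k : ℝ) + 1) ↔ y ∈ closedBall x (((k : ℝ) + 1) / R) := by
          rw [Set.mem_Iic, mem_closedBall, dist_comm, dist_eq_norm, le_div_iff₀ hR, mul_comm]
        by_cases hy : y ∈ closedBall x (((k : ℝ) + 1) / R)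
        · rw [Set.indicator_of_mem hy, Set.indicator_of_mem (this.2 hy)]; rfl
        · rw [Set.indicator_of_notMem hy, Set.indicator_of_notMem (mt this.1 hy)]
    _ = ∑' k : ℕ, ENNReal.ofReal (Real.exp (-k)) * μ (closedBall x (((k : ℝ) + 1) / R)) := by
        rw [lintegral_tsum fun k => ((measurable_one.indicator
          isClosed_closedBall.measurableSet).const_mul _).aemeasurable]
        refine tsum_congr fun k => ?_
        rw [lintegral_const_mul _ (measurable_one.indicator isClosed_closedBall.measurableSet),
          lintegral_indicator_one isClosed_closedBall.measurableSet]
    _ ≤ ∑' k : ℕ, ENNReal.ofReal (A * R ^ (-s) * (Real.exp (-k) * ((k : ℝ) + 1) ^ 2)) := by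
        refine ENNReal.tsum_le_tsum fun k => ?_
        refine (mul_le_mul_right (hfrost x (((k : ℝ) + 1) / R) (by positivity)) _).trans ?_
        rw [← ENNReal.ofReal_mul (by positivity)]
        refine ENNReal.ofReal_le_ofReal ?_
        rw [Real.div_rpow (by positivity) hR.le, Real.rpow_neg hR.le]
        have hk : ((k : ℝ) + 1) ^ s ≤ ((k : ℝ) + 1) ^ 2 := by
          rw [← Real.rpow_two]
          exact Real.rpow_le_rpow_of_exponent_le (by linarith [k.cast_nonneg (α := ℝ)]) hs2
        calc Real.exp (-k) * (A * (((k : ℝ) + 1) ^ s / R ^ s))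
            = A * (R ^ s)⁻¹ * (Real.exp (-k) * ((k : ℝ) + 1) ^ s) := by ring
          _ ≤ _ := by gcongr
    _ = ENNReal.ofReal (A * S * R ^ (-s)) := by
        rw [← ENNReal.ofReal_tsum_of_nonneg (fun k => by positivity) (hsum.mul_left _),
          tsum_mul_left, ← hS]
        congr 1
        ring

/-- The mean-square Fourier decay of a Frostman measure. -/
theorem exists_lintegral_closedBall_measureFT_sq_le {s A : ℝ} (hs2 : s ≤ 2)
    (hA : 0 < A) (μ : Measure ℝ²) [IsProbabilityMeasure μ]
    (hfrost : ∀ (x : ℝ²) (r : ℝ), 0 < r → μ (closedBall x r) ≤ ENNReal.ofReal (A * r ^ s)) :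
    ∃ C : ℝ, 0 < C ∧ ∀ (R : ℝ), 0 < R →
      ∫⁻ ξ in closedBall (0 : ℝ²) R, (‖measureFT μ ξ‖₊ : ℝ≥0∞) ^ 2 ≤
        ENNReal.ofReal (C * R ^ (2 - s)) := by
  obtain ⟨C, hC, hbound⟩ := exists_lintegral_gaussian_le_of_frostman hs2 hA μ hfrost
  refine ⟨Real.exp Real.pi * C, by positivity, fun R hR => ?_⟩
  have hint : Integrable (fun p : ℝ² × ℝ² => Real.exp (-Real.pi * (R * ‖p.1 - p.2‖) ^ 2))
      (μ.prod μ) := by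
    refine Integrable.of_bound (C := 1) (by fun_prop) (.of_forall fun p => ?_)
    rw [Real.norm_eq_abs, Real.abs_exp, Real.exp_le_one_iff]
    have := Real.pi_pos
    nlinarith [sq_nonneg (R * ‖p.1 - p.2‖)]
  have hdouble : ∫ p : ℝ² × ℝ², Real.exp (-Real.pi * (R * ‖p.1 - p.2‖) ^ 2) ∂μ.prod μ ≤
      C * R ^ (-s) := by
    rw [← ENNReal.ofReal_le_ofReal_iff (by positivity),
      ofReal_integral_eq_lintegral_ofReal hint (.of_forall fun p => (Real.exp_pos _).le),
      lintegral_prod _ (by fun_prop)]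
    refine (lintegral_mono fun x => hbound R hR x).trans ?_
    simp
  have hgauss : Integrable fun ξ : ℝ² =>
      ‖measureFT μ ξ‖ ^ 2 * Real.exp (-(Real.pi / R ^ 2) * ‖ξ‖ ^ 2) := by
    have hb : 0 < ((Real.pi / R ^ 2 : ℝ) : ℂ).re := by
      rw [Complex.ofReal_re]; positivity
    refine (GaussianFourier.integrable_cexp_neg_mul_sq_norm_add hb 0 (0 : ℝ²)).mono
      (((measurable_measureFT μ).norm.pow_const 2).mul (by fun_prop)).aestronglyMeasurable
      (.of_forall fun ξ => ?_)
    have h1 : ‖measureFT μ ξ‖ ≤ 1 := by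
      rw [measureFT_eq_charFun]; exact norm_charFun_le_one _
    have h2 : ‖Complex.exp (-((Real.pi / R ^ 2 : ℝ) : ℂ) * (‖ξ‖ : ℂ) ^ 2 +
        0 * ((⟪(0 : ℝ²), ξ⟫ : ℝ) : ℂ))‖ = Real.exp (-(Real.pi / R ^ 2) * ‖ξ‖ ^ 2) := by
      rw [Complex.norm_exp, zero_mul, add_zero, ← Complex.ofReal_pow, ← Complex.ofReal_neg,
        ← Complex.ofReal_mul, Complex.ofReal_re]
    rw [h2, norm_mul, Real.norm_eq_abs (Real.exp _), Real.abs_exp, norm_pow, norm_norm]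
    exact mul_le_of_le_one_left (Real.exp_pos _).le (pow_le_one₀ (norm_nonneg _) h1)
  calc ∫⁻ ξ in closedBall (0 : ℝ²) R, (‖measureFT μ ξ‖₊ : ℝ≥0∞) ^ 2
      ≤ ∫⁻ ξ in closedBall (0 : ℝ²) R, ENNReal.ofReal (Real.exp Real.pi *
          (‖measureFT μ ξ‖ ^ 2 * Real.exp (-(Real.pi / R ^ 2) * ‖ξ‖ ^ 2))) := by
        refine setLIntegral_mono' isClosed_closedBall.measurableSet fun ξ hξ => ?_
        rw [mem_closedBall, dist_zero_right] at hξ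
        have : (‖measureFT μ ξ‖₊ : ℝ≥0∞) ^ 2 = ENNReal.ofReal (‖measureFT μ ξ‖ ^ 2) := by
          rw [ENNReal.ofReal_pow (norm_nonneg _), ofReal_norm, enorm_eq_nnnorm]
        rw [this]
        refine ENNReal.ofReal_le_ofReal ?_
        rw [mul_left_comm, ← Real.exp_add]
        refine le_mul_of_one_le_right (by positivity) (Real.one_le_exp ?_)
        have h3 : ‖ξ‖ ^ 2 / R ^ 2 ≤ 1 := by
          rw [div_le_one (by positivity)]; gcongr
        have h4 : Real.pi + -(Real.pi / R ^ 2) * ‖ξ‖ ^ 2 = Real.pi * (1 - ‖ξ‖ ^ 2 / R ^ 2) := by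
          ring
        rw [h4]
        exact mul_nonneg Real.pi_pos.le (by linarith)
    _ ≤ ∫⁻ ξ, ENNReal.ofReal (Real.exp Real.pi *
          (‖measureFT μ ξ‖ ^ 2 * Real.exp (-(Real.pi / R ^ 2) * ‖ξ‖ ^ 2))) :=
        setLIntegral_le_lintegral _ _
    _ = ENNReal.ofReal (Real.exp Real.pi * (R ^ 2 *
          ∫ p : ℝ² × ℝ², Real.exp (-Real.pi * (R * ‖p.1 - p.2‖) ^ 2) ∂μ.prod μ)) := by
        rw [← ofReal_integral_eq_lintegral_ofReal (hgauss.const_mul _)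
          (.of_forall fun ξ => by positivity), integral_const_mul,
          integral_norm_sq_measureFT_mul_gaussian μ hR]
    _ ≤ ENNReal.ofReal (Real.exp Real.pi * C * R ^ (2 - s)) := by
        refine ENNReal.ofReal_le_ofReal ?_
        rw [sub_eq_add_neg, Real.rpow_add hR, Real.rpow_two]
        calc _ ≤ Real.exp Real.pi * (R ^ 2 * (C * R ^ (-s))) := by gcongr
          _ = _ := by ring

/-- The mean-square Fourier decay on balls of dyadic radius. -/
theorem exists_lintegral_dyadic_measureFT_sq_le {s A : ℝ} (hs2 : s ≤ 2)
    (hA : 0 < A) (μ : Measure ℝ²) [IsProbabilityMeasure μ]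
    (hfrost : ∀ (x : ℝ²) (r : ℝ), 0 < r → μ (closedBall x r) ≤ ENNReal.ofReal (A * r ^ s))
    {c : ℝ} (hc : 0 < c) :
    ∃ C : ℝ, 0 < C ∧ ∀ j : ℕ,
      ∫⁻ ξ in closedBall (0 : ℝ²) (c * 2 ^ j), (‖measureFT μ ξ‖₊ : ℝ≥0∞) ^ 2 ≤
        ENNReal.ofReal (C * 2 ^ ((j : ℝ) * (2 - s))) := by
  obtain ⟨C, hC, h⟩ := exists_lintegral_closedBall_measureFT_sq_le hs2 hA μ hfrost
  refine ⟨C * c ^ (2 - s), by positivity, fun j => (h (c * 2 ^ j) (by positivity)).trans_eq ?_⟩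
  rw [Real.mul_rpow hc.le (by positivity), ← Real.rpow_natCast, ← Real.rpow_mul two_pos.le,
    mul_assoc]

local notation "SL₂" => Matrix.SpecialLinearGroup (Fin 2) ℝ

instance SL2BorelSpace : BorelSpace SL₂ :=
  inferInstanceAs (BorelSpace {A : Matrix (Fin 2) (Fin 2) ℝ // A.det = 1})

theorem SL2_isClosedEmbedding_coe :
    Topology.IsClosedEmbedding (fun g : SL₂ => (g : Matrix (Fin 2) (Fin 2) ℝ)) :=
  (isClosed_eq (Continuous.matrix_det continuous_id) continuous_const).isClosedEmbedding_subtypeVal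

theorem SL2_continuous_coe : Continuous (fun g : SL₂ => (g : Matrix (Fin 2) (Fin 2) ℝ)) :=
  SL2_isClosedEmbedding_coe.continuous

instance SL2SecondCountableTopology : SecondCountableTopology SL₂ :=
  haveI : SecondCountableTopology (Matrix (Fin 2) (Fin 2) ℝ) :=
    inferInstanceAs (SecondCountableTopology (Fin 2 → Fin 2 → ℝ))
  SL2_isClosedEmbedding_coe.isEmbedding.secondCountableTopology

instance SL2SigmaCompactSpace : SigmaCompactSpace SL₂ :=
  haveI : SigmaCompactSpace (Matrix (Fin 2) (Fin 2) ℝ) :=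
    inferInstanceAs (SigmaCompactSpace (Fin 2 → Fin 2 → ℝ))
  SL2_isClosedEmbedding_coe.sigmaCompactSpace

theorem SL2_continuous_mul_right (h : SL₂) : Continuous (fun g : SL₂ => g * h) := by
  refine SL2_isClosedEmbedding_coe.isEmbedding.continuous_iff.2 ?_
  simp only [Function.comp_def, Matrix.SpecialLinearGroup.coe_mul]
  exact SL2_continuous_coe.matrix_mul continuous_const

theorem SL2_continuous_apply :
    Continuous (fun p : SL₂ × ℝ² => Matrix.toEuclideanLin (p.1 : Matrix (Fin 2) (Fin 2) ℝ) p.2) := by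
  simp only [Matrix.toLpLin_apply]
  refine (PiLp.continuous_toLp 2 _).comp ?_
  exact (SL2_continuous_coe.comp continuous_fst).matrix_mulVec
    ((PiLp.continuous_ofLp 2 _).comp continuous_snd)

/-- The elements of `SL₂(ℝ)` all of whose entries are at most `B` in absolute value. -/
def SL2Box (B : ℝ) : Set SL₂ := {g | ∀ i k, |(g : Matrix (Fin 2) (Fin 2) ℝ) i k| ≤ B}

theorem isCompact_SL2Box (B : ℝ) : IsCompact (SL2Box B) := by
  have hK : IsCompact {M : Matrix (Fin 2) (Fin 2) ℝ | ∀ i k, M i k ∈ Set.Icc (-B) B} := by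
    have := isCompact_univ_pi (X := fun _ : Fin 2 => Fin 2 → ℝ)
      (s := fun _ => Set.univ.pi fun _ => Set.Icc (-B) B)
      fun i => isCompact_univ_pi fun k => isCompact_Icc
    refine (congrArg (IsCompact (X := Fin 2 → Fin 2 → ℝ)) (Set.ext fun M => ?_)).mp this
    simp only [Set.mem_pi, Set.mem_univ, true_implies]
    exact Iff.rfl
  convert SL2_isClosedEmbedding_coe.isCompact_preimage hK using 1
  ext g
  simp only [SL2Box, Set.mem_ofPred_eq, Set.mem_preimage, abs_le, Set.mem_Icc]

theorem measurableSet_SL2Box (B : ℝ) : MeasurableSet (SL2Box B) := by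
  have : SL2Box B = ⋂ i, ⋂ k, {g : SL₂ | |(g : Matrix (Fin 2) (Fin 2) ℝ) i k| ≤ B} := by
    ext g; simp [SL2Box]
  rw [this]
  exact (isClosed_iInter fun i => isClosed_iInter fun k => isClosed_le
    (SL2_continuous_coe.matrix_elem i k).abs continuous_const).measurableSet

theorem exists_subset_SL2Box {K : Set SL₂} (hK : IsCompact K) :
    ∃ B : ℝ, 0 < B ∧ K ⊆ SL2Box B := by
  have hcont : ∀ i k, Continuous fun g : SL₂ => |(g : Matrix (Fin 2) (Fin 2) ℝ) i k| :=
    fun i k => (SL2_continuous_coe.matrix_elem i k).abs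
  have hbd : ∀ i k, ∃ B : ℝ, ∀ g ∈ K, |(g : Matrix (Fin 2) (Fin 2) ℝ) i k| ≤ B := by
    intro i k
    obtain ⟨B, hB⟩ := hK.bddAbove_image (hcont i k).continuousOn
    exact ⟨B, fun g hg => hB ⟨g, hg, rfl⟩⟩
  choose B hB using hbd
  refine ⟨1 + ∑ i, ∑ k, |B i k|, by positivity, fun g hg i k => ?_⟩
  calc _ ≤ |B i k| := (hB i k g hg).trans (le_abs_self _)
    _ ≤ ∑ k, |B i k| :=
      Finset.single_le_sum (f := fun k => |B i k|) (fun _ _ => abs_nonneg _) (Finset.mem_univ k)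
    _ ≤ ∑ i, ∑ k, |B i k| :=
      Finset.single_le_sum (f := fun i => ∑ k, |B i k|) (fun _ _ => by positivity)
        (Finset.mem_univ i)
    _ ≤ _ := by linarith

theorem norm_sq_plane (x : ℝ²) : ‖x‖ ^ 2 = x 0 ^ 2 + x 1 ^ 2 := by
  simp [EuclideanSpace.norm_sq_eq, Fin.sum_univ_two]

theorem SL2_apply_zero (g : SL₂) (x : ℝ²) :
    Matrix.toEuclideanLin (g : Matrix (Fin 2) (Fin 2) ℝ) x 0 = g 0 0 * x 0 + g 0 1 * x 1 := by
  simp [Matrix.toLpLin_apply]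

theorem SL2_apply_one (g : SL₂) (x : ℝ²) :
    Matrix.toEuclideanLin (g : Matrix (Fin 2) (Fin 2) ℝ) x 1 = g 1 0 * x 0 + g 1 1 * x 1 := by
  simp [Matrix.toLpLin_apply]

theorem SL2Box.norm_apply_le {B : ℝ} {g : SL₂} (hg : g ∈ SL2Box B) (x : ℝ²) :
    ‖Matrix.toEuclideanLin (g : Matrix (Fin 2) (Fin 2) ℝ) x‖ ≤ 2 * B * ‖x‖ := by
  have hB : 0 ≤ B := (abs_nonneg _).trans (hg 0 0)
  refine abs_le_of_sq_le_sq' ?_ (by positivity) |>.2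
  rw [norm_sq_plane, SL2_apply_zero, SL2_apply_one, mul_pow, norm_sq_plane x]
  have hrow : ∀ i, (g i 0 * x 0 + g i 1 * x 1) ^ 2 ≤ 2 * B ^ 2 * (x 0 ^ 2 + x 1 ^ 2) := by
    intro i
    have h0 : (g i 0) ^ 2 ≤ B ^ 2 := sq_le_sq' (abs_le.1 (hg i 0)).1 (abs_le.1 (hg i 0)).2
    have h1 : (g i 1) ^ 2 ≤ B ^ 2 := sq_le_sq' (abs_le.1 (hg i 1)).1 (abs_le.1 (hg i 1)).2
    calc (g i 0 * x 0 + g i 1 * x 1) ^ 2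
        ≤ ((g i 0) ^ 2 + (g i 1) ^ 2) * (x 0 ^ 2 + x 1 ^ 2) := by
          nlinarith [sq_nonneg (g i 0 * x 1 - g i 1 * x 0)]
      _ ≤ _ := by gcongr; linarith
  linarith [hrow 0, hrow 1]

theorem SL2Box.mul_mem {B D : ℝ} {g h : SL₂} (hg : g ∈ SL2Box B) (hh : h ∈ SL2Box D) :
    g * h ∈ SL2Box (2 * (B * D)) := by
  have hB : 0 ≤ B := (abs_nonneg _).trans (hg 0 0)
  intro i k
  rw [Matrix.SpecialLinearGroup.coe_mul, Matrix.mul_apply, Fin.sum_univ_two]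
  refine (abs_add_le _ _).trans ?_
  rw [abs_mul, abs_mul, two_mul]
  gcongr <;> first | exact hg _ _ | exact hh _ _

theorem SL2Box.inv_mem {B : ℝ} {g : SL₂} (hg : g ∈ SL2Box B) : g⁻¹ ∈ SL2Box B := by
  intro i k
  rw [Matrix.SpecialLinearGroup.coe_inv, Matrix.adjugate_fin_two]
  fin_cases i <;> fin_cases k <;> simp [hg _ _]

/-- Two nonzero vectors of comparable length are related by a bounded element of `SL₂(ℝ)`. -/
theorem exists_SL2Box_apply_eq {u y : ℝ²} (hu : ‖u‖ = 1) (hy1 : 1 ≤ ‖y‖) (hy2 : ‖y‖ ≤ 2) :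
    ∃ h ∈ SL2Box 4, Matrix.toEuclideanLin (h : Matrix (Fin 2) (Fin 2) ℝ) u = y := by
  have hu2 : u 0 ^ 2 + u 1 ^ 2 = 1 := by rw [← norm_sq_plane, hu, one_pow]
  have hysq : ‖y‖ ^ 2 = y 0 ^ 2 + y 1 ^ 2 := norm_sq_plane y
  set n := ‖y‖ ^ 2 with hn
  have hn1 : 1 ≤ n := one_le_pow₀ hy1
  have hn4 : n ≤ 4 := by rw [hn]; nlinarith
  have hn0 : n ≠ 0 := by positivity
  have hdet : y 0 * (y 0 / n) + y 1 * (y 1 / n) = 1 := by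
    rw [mul_div_assoc', mul_div_assoc', ← add_div, ← sq, ← sq, ← hysq, div_self hn0]
  let h : SL₂ := ⟨!![y 0 * u 0 + y 1 / n * u 1, y 0 * u 1 - y 1 / n * u 0;
      y 1 * u 0 - y 0 / n * u 1, y 1 * u 1 + y 0 / n * u 0], by
    rw [Matrix.det_fin_two_of]
    linear_combination hdet + (y 0 * (y 0 / n) + y 1 * (y 1 / n)) * hu2⟩
  have hu0 : |u 0| ≤ 1 := abs_le_one_iff_mul_self_le_one.2 (by nlinarith [sq_nonneg (u 1)])
  have hu1 : |u 1| ≤ 1 := abs_le_one_iff_mul_self_le_one.2 (by nlinarith [sq_nonneg (u 0)])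
  have hy0 : |y 0| ≤ 2 := abs_le_of_sq_le_sq (by nlinarith [sq_nonneg (y 1)]) two_pos.le
  have hy1 : |y 1| ≤ 2 := abs_le_of_sq_le_sq (by nlinarith [sq_nonneg (y 0)]) two_pos.le
  have hdiv : ∀ {t : ℝ}, |t| ≤ 2 → |t / n| ≤ 2 := by
    intro t ht
    rw [abs_div, abs_of_pos (by positivity : 0 < n)]
    exact (div_le_self (abs_nonneg _) hn1).trans ht
  have hmul : ∀ {a b : ℝ}, |a| ≤ 2 → |b| ≤ 1 → |a * b| ≤ 2 := by
    intro a b ha hb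
    rw [abs_mul]
    nlinarith [abs_nonneg a, abs_nonneg b]
  have hadd : ∀ {a b : ℝ}, |a| ≤ 2 → |b| ≤ 2 → |a + b| ≤ 4 := fun ha hb =>
    (abs_add_le _ _).trans (by linarith)
  have hsub : ∀ {a b : ℝ}, |a| ≤ 2 → |b| ≤ 2 → |a - b| ≤ 4 := fun ha hb =>
    (abs_sub _ _).trans (by linarith)
  refine ⟨h, fun i k => ?_, ?_⟩
  · fin_cases i <;> fin_cases k
    · exact hadd (hmul hy0 hu0) (hmul (hdiv hy1) hu1)
    · exact hsub (hmul hy0 hu1) (hmul (hdiv hy1) hu0)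
    · exact hsub (hmul hy1 hu0) (hmul (hdiv hy0) hu1)
    · exact hadd (hmul hy1 hu1) (hmul (hdiv hy0) hu0)
  · ext i
    fin_cases i
    · change Matrix.toEuclideanLin (h : Matrix (Fin 2) (Fin 2) ℝ) u 0 = y 0
      rw [SL2_apply_zero]
      change (y 0 * u 0 + y 1 / n * u 1) * u 0 + (y 0 * u 1 - y 1 / n * u 0) * u 1 = y 0
      linear_combination y 0 * hu2
    · change Matrix.toEuclideanLin (h : Matrix (Fin 2) (Fin 2) ℝ) u 1 = y 1
      rw [SL2_apply_one]
      change (y 1 * u 0 - y 0 / n * u 1) * u 0 + (y 1 * u 1 + y 0 / n * u 0) * u 1 = y 1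
      linear_combination y 1 * hu2

theorem lintegral_smul_SL2_apply (g : SL₂) {R : ℝ} (hR : 0 < R) {f : ℝ² → ℝ≥0∞}
    (hf : Measurable f) :
    ∫⁻ y, f (R • Matrix.toEuclideanLin (g : Matrix (Fin 2) (Fin 2) ℝ) y) =
      ENNReal.ofReal (R ^ 2)⁻¹ * ∫⁻ z, f z := by
  have hdet : LinearMap.det (R • Matrix.toEuclideanLin (g : Matrix (Fin 2) (Fin 2) ℝ)) = R ^ 2 := by
    have h1 : LinearMap.det (Matrix.toEuclideanLin (g : Matrix (Fin 2) (Fin 2) ℝ)) = 1 :=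
      (LinearMap.det_toLin (PiLp.basisFun 2 ℝ (Fin 2)) _).trans g.det_coe
    rw [LinearMap.det_smul, h1, finrank_euclideanSpace_fin, mul_one]
  have hmap := Measure.map_linearMap_addHaar_eq_smul_addHaar (volume : Measure ℝ²)
    (f := R • Matrix.toEuclideanLin (g : Matrix (Fin 2) (Fin 2) ℝ))
    (by rw [hdet]; positivity)
  have hmeas : Measurable (R • Matrix.toEuclideanLin (g : Matrix (Fin 2) (Fin 2) ℝ)) :=
    (LinearMap.continuous_of_finiteDimensional _).measurable
  rw [hdet, abs_of_pos (by positivity)] at hmap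
  have := lintegral_map (μ := volume) hf hmeas
  rw [hmap, lintegral_smul_measure, smul_eq_mul] at this
  simpa using this.symm

/-- Averaging over a bounded part of `SL₂(ℝ)` against a right-invariant measure is dominated by
averaging over the plane. -/
theorem exists_lintegral_SL2_apply_le (lam : Measure SL₂) [IsFiniteMeasureOnCompacts lam]
    (hinv : ∀ g₀ : SL₂, lam.map (fun g => g * g₀) = lam) (B : ℝ) :
    ∃ C : ℝ, 0 < C ∧ ∀ (η : ℝ²), η ≠ 0 → ∀ f : ℝ² → ℝ≥0∞, Measurable f →
      ∫⁻ g in SL2Box B, f (Matrix.toEuclideanLin (g : Matrix (Fin 2) (Fin 2) ℝ) η) ∂lam ≤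
        ENNReal.ofReal (C * (‖η‖ ^ 2)⁻¹) * ∫⁻ z, f z := by
  set Y : Set ℝ² := closedBall 0 2 \ ball 0 1 with hY
  have hYm : MeasurableSet Y := isClosed_closedBall.measurableSet.diff isOpen_ball.measurableSet
  set K := SL2Box (2 * (B * 4))
  have hKfin : lam K < ∞ := (isCompact_SL2Box _).measure_lt_top
  have hYpos : volume Y ≠ 0 := by
    have hsub : ball (EuclideanSpace.single 0 (3 / 2 : ℝ) : ℝ²) (1 / 2) ⊆ Y := by
      intro z hz
      rw [mem_ball, dist_eq_norm] at hz
      have hn : ‖(EuclideanSpace.single 0 (3 / 2 : ℝ) : ℝ²)‖ = 3 / 2 := by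
        simp
      have h1 := abs_norm_sub_norm_le z (EuclideanSpace.single 0 (3 / 2 : ℝ) : ℝ²)
      rw [hn, abs_le] at h1
      simp only [hY, Set.mem_sdiff, mem_closedBall, mem_ball, dist_zero_right, not_lt]
      constructor <;> linarith
    exact ((measure_ball_pos volume _ (by norm_num)).trans_le (measure_mono hsub)).ne'
  have hYfin : volume Y ≠ ∞ :=
    ((measure_mono Set.sdiff_subset).trans_lt measure_closedBall_lt_top).ne
  refine ⟨(lam K / volume Y).toReal + 1, by positivity, fun η hη f hf => ?_⟩
  have hR : 0 < ‖η‖ := norm_pos_iff.2 hη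
  set R := ‖η‖
  set I := ∫⁻ g in SL2Box B, f (Matrix.toEuclideanLin (g : Matrix (Fin 2) (Fin 2) ℝ) η) ∂lam
  have hact : Measurable (fun p : SL₂ × ℝ² =>
      f (R • Matrix.toEuclideanLin (p.1 : Matrix (Fin 2) (Fin 2) ℝ) p.2)) :=
    hf.comp (SL2_continuous_apply.measurable.const_smul R)
  have hpoint : ∀ y ∈ Y, I ≤
      ∫⁻ g in K, f (R • Matrix.toEuclideanLin (g : Matrix (Fin 2) (Fin 2) ℝ) y) ∂lam := by
    intro y hy
    simp only [hY, Set.mem_sdiff, mem_closedBall, mem_ball, dist_zero_right, not_lt] at hy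
    have hu : ‖R⁻¹ • η‖ = 1 := by
      rw [norm_smul, norm_inv, Real.norm_of_nonneg hR.le, inv_mul_cancel₀ hR.ne']
    obtain ⟨h, hh, hhu⟩ := exists_SL2Box_apply_eq hu hy.2 hy.1
    have hhη : Matrix.toEuclideanLin (h : Matrix (Fin 2) (Fin 2) ℝ) η = R • y := by
      rw [← hhu, map_smul, smul_smul, mul_inv_cancel₀ hR.ne', one_smul]
    have hF : Measurable ((SL2Box B).indicator fun g : SL₂ =>
        f (Matrix.toEuclideanLin (g : Matrix (Fin 2) (Fin 2) ℝ) η)) :=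
      (hf.comp (SL2_continuous_apply.comp (.prodMk_left η)).measurable).indicator (measurableSet_SL2Box B)
    calc I = ∫⁻ g, (SL2Box B).indicator (fun g : SL₂ =>
          f (Matrix.toEuclideanLin (g : Matrix (Fin 2) (Fin 2) ℝ) η)) (g * h) ∂lam := by
          rw [← lintegral_map hF (SL2_continuous_mul_right h).measurable, hinv,
            lintegral_indicator (measurableSet_SL2Box B)]
      _ ≤ ∫⁻ g, K.indicator (fun g : SL₂ =>
          f (R • Matrix.toEuclideanLin (g : Matrix (Fin 2) (Fin 2) ℝ) y)) g ∂lam := by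
          refine lintegral_mono fun g => ?_
          by_cases hgh : g * h ∈ SL2Box B
          swap
          · rw [Set.indicator_of_notMem hgh]; exact zero_le
          have hgK : g ∈ K := by
            have := SL2Box.mul_mem hgh (SL2Box.inv_mem hh)
            rwa [mul_inv_cancel_right] at this
          rw [Set.indicator_of_mem hgh, Set.indicator_of_mem hgK,
            Matrix.SpecialLinearGroup.coe_mul, ← map_smul, ← hhη, Matrix.toLpLin_apply, Matrix.toLpLin_apply, Matrix.toLpLin_apply,
            Matrix.mulVec_mulVec]
      _ = _ := lintegral_indicator (measurableSet_SL2Box _) _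
  have havg : volume Y * I ≤ lam K * (ENNReal.ofReal (R ^ 2)⁻¹ * ∫⁻ z, f z) := by
    calc volume Y * I = ∫⁻ _ in Y, I := by rw [setLIntegral_const, mul_comm]
      _ ≤ ∫⁻ y in Y, ∫⁻ g in K,
          f (R • Matrix.toEuclideanLin (g : Matrix (Fin 2) (Fin 2) ℝ) y) ∂lam :=
          setLIntegral_mono' hYm hpoint
      _ = ∫⁻ g in K, (∫⁻ y in Y,
          f (R • Matrix.toEuclideanLin (g : Matrix (Fin 2) (Fin 2) ℝ) y)) ∂lam :=
          lintegral_lintegral_swap (hact.comp measurable_swap).aemeasurable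
      _ ≤ ∫⁻ _ in K, (ENNReal.ofReal (R ^ 2)⁻¹ * ∫⁻ z, f z) ∂lam := by
          refine lintegral_mono fun g => (setLIntegral_le_lintegral _ _).trans_eq ?_
          exact lintegral_smul_SL2_apply g hR hf
      _ = _ := by rw [setLIntegral_const, mul_comm]
  have hquot : lam K / volume Y ≤ ENNReal.ofReal ((lam K / volume Y).toReal + 1) := by
    rw [← ENNReal.ofReal_toReal (ENNReal.div_ne_top hKfin.ne hYpos)]
    refine ENNReal.ofReal_le_ofReal ?_
    rw [ENNReal.toReal_ofReal ENNReal.toReal_nonneg]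
    linarith
  calc I ≤ lam K * (ENNReal.ofReal (R ^ 2)⁻¹ * ∫⁻ z, f z) / volume Y := by
        rw [ENNReal.le_div_iff_mul_le (.inl hYpos) (.inl hYfin), mul_comm]
        exact havg
    _ = lam K / volume Y * (ENNReal.ofReal (R ^ 2)⁻¹ * ∫⁻ z, f z) := by
        simp only [div_eq_mul_inv]; ring
    _ ≤ ENNReal.ofReal ((lam K / volume Y).toReal + 1) *
        (ENNReal.ofReal (R ^ 2)⁻¹ * ∫⁻ z, f z) := by gcongr
    _ = _ := by rw [ENNReal.ofReal_mul (by positivity), mul_assoc]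

theorem ENNReal.mul_le_sq_add_sq (x y : ℝ≥0∞) : x * y ≤ x ^ 2 + y ^ 2 := by
  rcases le_total x y with h | h
  · calc x * y ≤ y * y := mul_le_mul_left h _
      _ = y ^ 2 := (sq y).symm
      _ ≤ _ := le_add_self
  · calc x * y ≤ x * x := mul_le_mul_right h _
      _ = x ^ 2 := (sq x).symm
      _ ≤ _ := le_self_add

theorem sq_lintegral_mul_le {X : Type*} [MeasurableSpace X] (μ : Measure X) {f g : X → ℝ≥0∞}
    (hf : Measurable f) (hg : Measurable g) :
    (∫⁻ x, f x * g x ∂μ) ^ 2 ≤ (∫⁻ x, f x ^ 2 ∂μ) * ∫⁻ x, g x ^ 2 ∂μ := by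
  have h := ENNReal.lintegral_mul_le_Lp_mul_Lq μ Real.HolderConjugate.two_two
    hf.aemeasurable hg.aemeasurable
  have hsqrt : ∀ z : ℝ≥0∞, (z ^ (1 / 2 : ℝ)) ^ 2 = z := fun z => by
    rw [← ENNReal.rpow_two, ← ENNReal.rpow_mul]; norm_num
  calc (∫⁻ x, f x * g x ∂μ) ^ 2 ≤ _ := pow_le_pow_left' h 2
    _ = _ := by rw [mul_pow, hsqrt, hsqrt]; simp only [ENNReal.rpow_two]

theorem lintegral_lintegral_lintegral_mul {G X Y : Type*} [MeasurableSpace G] [MeasurableSpace X]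
    [MeasurableSpace Y] {lam : Measure G} {μ : Measure X} {ν : Measure Y} [SFinite lam]
    [SFinite μ] [SFinite ν] {p : G → X → ℝ≥0∞} {q : G → Y → ℝ≥0∞}
    (hp : Measurable (Function.uncurry p)) (hq : Measurable (Function.uncurry q)) :
    ∫⁻ x, ∫⁻ y, ∫⁻ g, p g x * q g y ∂lam ∂ν ∂μ =
      ∫⁻ g, (∫⁻ x, p g x ∂μ) * (∫⁻ y, q g y ∂ν) ∂lam := by
  have hQ : Measurable fun g => ∫⁻ y, q g y ∂ν := hq.lintegral_prod_right'
  calc ∫⁻ x, ∫⁻ y, ∫⁻ g, p g x * q g y ∂lam ∂ν ∂μ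
      = ∫⁻ x, ∫⁻ g, p g x * ∫⁻ y, q g y ∂ν ∂lam ∂μ := by
        refine lintegral_congr fun x => ?_
        rw [lintegral_lintegral_swap]
        · refine lintegral_congr fun g => ?_
          exact lintegral_const_mul _ (hq.comp measurable_prodMk_left)
        · exact (((hp.comp measurable_prodMk_right).comp measurable_snd).mul
            (hq.comp measurable_swap)).aemeasurable
    _ = ∫⁻ g, ∫⁻ x, p g x * ∫⁻ y, q g y ∂ν ∂μ ∂lam := by
        refine lintegral_lintegral_swap ?_
        exact ((hp.comp measurable_swap).mul (hQ.comp measurable_snd)).aemeasurable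
    _ = _ := by
        refine lintegral_congr fun g => ?_
        exact lintegral_mul_const _ (hp.comp measurable_prodMk_left)

/-- **Dyadic annulus estimate** in the proof of the planar sum-product theorem
(Theorem 1.5 of "Group actions, the Mattila integral and applications"): for Frostman
probability measures `μ_E, μ_F, μ_H` on `ℝ²` with exponents `s_E, s_F, s_H`, a
nonnegative continuous compactly supported `ψ` on `SL₂(ℝ)` and a right Haar measure `λ`,
`∬_{2^j ≤ |ξ|,|η| ≤ 2^{j+1}} |μ̂_E(ξ)| |μ̂_F(η)| |μ̂_H(η)|
  (∫_{SL₂(ℝ)} |μ̂_E(gξ)| |μ̂_F(gη)| |μ̂_H(gη)| ψ(g) dλ(g)) dξ dη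
  ≤ C 2^{j(4 - s_E - s_F - s_H)}` for all `j ≥ 0`. -/
theorem sl2_dyadic_annulus_estimate
    (sE sF sH A : ℝ) (hsE : 0 < sE) (hsE2 : sE ≤ 2) (hsF : 0 < sF) (hsF2 : sF ≤ 2)
    (hsH : 0 < sH) (hsH2 : sH ≤ 2) (hA : 0 < A)
    (μE μF μH : Measure (EuclideanSpace ℝ (Fin 2)))
    [IsProbabilityMeasure μE] [IsProbabilityMeasure μF] [IsProbabilityMeasure μH]
    (hEc : ∃ K, IsCompact K ∧ μE Kᶜ = 0)
    (hFc : ∃ K, IsCompact K ∧ μF Kᶜ = 0)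
    (hHc : ∃ K, IsCompact K ∧ μH Kᶜ = 0)
    (hfrostE : ∀ (x : EuclideanSpace ℝ (Fin 2)) (r : ℝ), 0 < r →
      μE (closedBall x r) ≤ ENNReal.ofReal (A * r ^ sE))
    (hfrostF : ∀ (x : EuclideanSpace ℝ (Fin 2)) (r : ℝ), 0 < r →
      μF (closedBall x r) ≤ ENNReal.ofReal (A * r ^ sF))
    (hfrostH : ∀ (x : EuclideanSpace ℝ (Fin 2)) (r : ℝ), 0 < r →
      μH (closedBall x r) ≤ ENNReal.ofReal (A * r ^ sH))
    (ψ : Matrix.SpecialLinearGroup (Fin 2) ℝ → ℝ) (hψ0 : ∀ g, 0 ≤ ψ g)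
    (hψ : Continuous ψ) (hψc : HasCompactSupport ψ)
    (lam : Measure (Matrix.SpecialLinearGroup (Fin 2) ℝ)) (hlam0 : lam ≠ 0)
    (hlamfin : IsFiniteMeasureOnCompacts lam)
    (hinv : ∀ g₀ : Matrix.SpecialLinearGroup (Fin 2) ℝ,
      lam.map (fun g => g * g₀) = lam) :
    ∃ C : ℝ, 0 < C ∧ ∀ j : ℕ,
      ∫⁻ ξ in {ξ : EuclideanSpace ℝ (Fin 2) | (2 : ℝ) ^ j ≤ ‖ξ‖ ∧ ‖ξ‖ ≤ 2 ^ (j + 1)},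
        ∫⁻ η in {η : EuclideanSpace ℝ (Fin 2) | (2 : ℝ) ^ j ≤ ‖η‖ ∧ ‖η‖ ≤ 2 ^ (j + 1)},
          (‖measureFT μE ξ‖₊ : ℝ≥0∞) * (‖measureFT μF η‖₊ : ℝ≥0∞)
            * (‖measureFT μH η‖₊ : ℝ≥0∞)
          * ∫⁻ g, (‖measureFT μE (Matrix.toEuclideanLin ((g : Matrix (Fin 2) (Fin 2) ℝ)) ξ)‖₊ : ℝ≥0∞)
              * (‖measureFT μF (Matrix.toEuclideanLin ((g : Matrix (Fin 2) (Fin 2) ℝ)) η)‖₊ : ℝ≥0∞)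
              * (‖measureFT μH (Matrix.toEuclideanLin ((g : Matrix (Fin 2) (Fin 2) ℝ)) η)‖₊ : ℝ≥0∞)
              * ENNReal.ofReal (ψ g) ∂lam
        ≤ ENNReal.ofReal (C * 2 ^ ((j : ℝ) * (4 - sE - sF - sH))) := by
  obtain ⟨B, hB, hKB⟩ := exists_subset_SL2Box hψc
  obtain ⟨M, hM0, hM⟩ : ∃ M : ℝ, 0 < M ∧ ∀ g, ψ g ≤ M := by
    obtain ⟨M, hM⟩ := hψc.exists_bound_of_continuous hψ
    exact ⟨|M| + 1, by positivity, fun g =>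
      (le_abs_self _).trans ((hM g).trans (by linarith [le_abs_self M]))⟩
  have hc : 0 < 4 * B + 2 := by positivity
  obtain ⟨CE, hCE, hE⟩ := exists_lintegral_dyadic_measureFT_sq_le hsE2 hA μE hfrostE hc
  obtain ⟨CF, hCF, hF⟩ := exists_lintegral_dyadic_measureFT_sq_le hsF2 hA μF hfrostF hc
  obtain ⟨CH, hCH, hH⟩ := exists_lintegral_dyadic_measureFT_sq_le hsH2 hA μH hfrostH hc
  obtain ⟨CG, hCG, hG⟩ := exists_lintegral_SL2_apply_le lam hinv B
  refine ⟨M * (2 * CE) * CG * (CF * CH), by positivity, fun j => ?_⟩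
  set S : Set ℝ² := {ξ : ℝ² | (2 : ℝ) ^ j ≤ ‖ξ‖ ∧ ‖ξ‖ ≤ 2 ^ (j + 1)}
  set D : Set ℝ² := closedBall (0 : ℝ²) ((4 * B + 2) * 2 ^ j)
  have hSm : MeasurableSet S :=
    (measurableSet_le measurable_const measurable_norm).inter
      (measurableSet_le measurable_norm measurable_const)
  have hDm : MeasurableSet D := isClosed_closedBall.measurableSet
  have hSD : S ⊆ D := fun ξ hξ => by
    rw [mem_closedBall, dist_zero_right]
    refine hξ.2.trans ?_
    rw [pow_succ]
    nlinarith [pow_pos (two_pos (α := ℝ)) j]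
  have hmaps : ∀ g ∈ SL2Box B, ∀ ξ ∈ S,
      Matrix.toEuclideanLin (g : Matrix (Fin 2) (Fin 2) ℝ) ξ ∈ D := fun g hg ξ hξ => by
    rw [mem_closedBall, dist_zero_right]
    refine (SL2Box.norm_apply_le hg ξ).trans ?_
    have h1 : 2 * B * ‖ξ‖ ≤ 2 * B * 2 ^ (j + 1) := by gcongr; exact hξ.2
    refine h1.trans ?_
    rw [pow_succ]
    nlinarith [pow_pos (two_pos (α := ℝ)) j]
  set a : ℝ² → ℝ≥0∞ := fun ξ => (‖measureFT μE ξ‖₊ : ℝ≥0∞) with ha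
  set b : ℝ² → ℝ≥0∞ := fun η =>
    (‖measureFT μF η‖₊ : ℝ≥0∞) * (‖measureFT μH η‖₊ : ℝ≥0∞) with hb
  have ham : Measurable a := (measurable_measureFT μE).nnnorm.coe_nnreal_ennreal
  have hFm : Measurable fun η => (‖measureFT μF η‖₊ : ℝ≥0∞) :=
    (measurable_measureFT μF).nnnorm.coe_nnreal_ennreal
  have hHm : Measurable fun η => (‖measureFT μH η‖₊ : ℝ≥0∞) :=
    (measurable_measureFT μH).nnnorm.coe_nnreal_ennreal
  have hbm : Measurable b := hFm.mul hHm
  have hbD : (∫⁻ η in D, b η) ^ 2 ≤ ENNReal.ofReal (CF * 2 ^ ((j : ℝ) * (2 - sF))) *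
      ENNReal.ofReal (CH * 2 ^ ((j : ℝ) * (2 - sH))) :=
    (sq_lintegral_mul_le _ hFm hHm).trans (mul_le_mul' (hF j) (hH j))
  have hEg : ∀ g ∈ SL2Box B,
      ∫⁻ ξ in S, a ξ * a (Matrix.toEuclideanLin (g : Matrix (Fin 2) (Fin 2) ℝ) ξ) ≤
        ENNReal.ofReal (2 * CE * 2 ^ ((j : ℝ) * (2 - sE))) := by
    intro g hg
    calc ∫⁻ ξ in S, a ξ * a (Matrix.toEuclideanLin (g : Matrix (Fin 2) (Fin 2) ℝ) ξ)
        ≤ ∫⁻ ξ in S, (a ξ ^ 2 + D.indicator (fun z => a z ^ 2)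
            ((1 : ℝ) • Matrix.toEuclideanLin (g : Matrix (Fin 2) (Fin 2) ℝ) ξ)) := by
          refine setLIntegral_mono' hSm fun ξ hξ => ?_
          rw [one_smul, Set.indicator_of_mem (hmaps g hg ξ hξ)]
          exact ENNReal.mul_le_sq_add_sq _ _
      _ = (∫⁻ ξ in S, a ξ ^ 2) + ∫⁻ ξ in S, D.indicator (fun z => a z ^ 2)
            ((1 : ℝ) • Matrix.toEuclideanLin (g : Matrix (Fin 2) (Fin 2) ℝ) ξ) :=
          lintegral_add_left (ham.pow_const 2) _
      _ ≤ (∫⁻ ξ in D, a ξ ^ 2) + ∫⁻ ξ in D, a ξ ^ 2 := by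
          refine add_le_add (lintegral_mono_set hSD) ?_
          refine (setLIntegral_le_lintegral _ _).trans_eq ?_
          rw [lintegral_smul_SL2_apply g one_pos ((ham.pow_const 2).indicator hDm),
            lintegral_indicator hDm]
          simp
      _ ≤ _ := by
          refine (add_le_add (hE j) (hE j)).trans_eq ?_
          rw [← ENNReal.ofReal_add (by positivity) (by positivity)]
          congr 1
          ring
  have hFHg : ∫⁻ g in SL2Box B, (∫⁻ η in S,
      b η * b (Matrix.toEuclideanLin (g : Matrix (Fin 2) (Fin 2) ℝ) η)) ∂lam ≤
        ENNReal.ofReal (CG * (((2 : ℝ) ^ j) ^ 2)⁻¹) * (∫⁻ η in D, b η) ^ 2 := by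
    have hmeas : Measurable (fun p : SL₂ × ℝ² =>
        b p.2 * b (Matrix.toEuclideanLin (p.1 : Matrix (Fin 2) (Fin 2) ℝ) p.2)) :=
      (hbm.comp measurable_snd).mul (hbm.comp SL2_continuous_apply.measurable)
    rw [lintegral_lintegral_swap hmeas.aemeasurable]
    calc ∫⁻ η in S, (∫⁻ g in SL2Box B,
          b η * b (Matrix.toEuclideanLin (g : Matrix (Fin 2) (Fin 2) ℝ) η) ∂lam)
        ≤ ∫⁻ η in S, b η * (ENNReal.ofReal (CG * (((2 : ℝ) ^ j) ^ 2)⁻¹) * ∫⁻ z in D, b z) := by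
          refine setLIntegral_mono' hSm fun η hη => ?_
          have hη0 : η ≠ 0 := norm_pos_iff.1 ((pow_pos two_pos j).trans_le hη.1)
          rw [lintegral_const_mul' _ _ (by simp only [hb]; finiteness)]
          gcongr
          calc ∫⁻ g in SL2Box B, b (Matrix.toEuclideanLin (g : Matrix (Fin 2) (Fin 2) ℝ) η) ∂lam
              = ∫⁻ g in SL2Box B, D.indicator b
                  (Matrix.toEuclideanLin (g : Matrix (Fin 2) (Fin 2) ℝ) η) ∂lam :=
                setLIntegral_congr_fun (measurableSet_SL2Box B) fun g hg =>
                  (Set.indicator_of_mem (hmaps g hg η hη) b).symm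
            _ ≤ ENNReal.ofReal (CG * (‖η‖ ^ 2)⁻¹) * ∫⁻ z, D.indicator b z :=
                hG η hη0 _ (hbm.indicator hDm)
            _ ≤ _ := by
                rw [lintegral_indicator hDm]
                gcongr
                exact hη.1
      _ = (∫⁻ η in S, b η) *
          (ENNReal.ofReal (CG * (((2 : ℝ) ^ j) ^ 2)⁻¹) * ∫⁻ z in D, b z) :=
          lintegral_mul_const _ hbm
      _ ≤ (∫⁻ η in D, b η) *
          (ENNReal.ofReal (CG * (((2 : ℝ) ^ j) ^ 2)⁻¹) * ∫⁻ z in D, b z) :=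
          mul_le_mul_left (lintegral_mono_set hSD) _
      _ = _ := by ring
  have hpm : Measurable (fun p : SL₂ × ℝ² =>
      a p.2 * a (Matrix.toEuclideanLin (p.1 : Matrix (Fin 2) (Fin 2) ℝ) p.2)) :=
    (ham.comp measurable_snd).mul (ham.comp SL2_continuous_apply.measurable)
  have hqm : Measurable (fun p : SL₂ × ℝ² => ENNReal.ofReal M *
      (b p.2 * b (Matrix.toEuclideanLin (p.1 : Matrix (Fin 2) (Fin 2) ℝ) p.2))) :=
    ((hbm.comp measurable_snd).mul (hbm.comp SL2_continuous_apply.measurable)).const_mul _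
  calc _ ≤ ∫⁻ ξ in S, ∫⁻ η in S, ∫⁻ g in SL2Box B,
        (a ξ * a (Matrix.toEuclideanLin (g : Matrix (Fin 2) (Fin 2) ℝ) ξ)) *
        (ENNReal.ofReal M *
          (b η * b (Matrix.toEuclideanLin (g : Matrix (Fin 2) (Fin 2) ℝ) η))) ∂lam := by
        refine lintegral_mono fun ξ => lintegral_mono fun η => ?_
        rw [← lintegral_const_mul' _ _ (by finiteness),
          ← lintegral_indicator (measurableSet_SL2Box B)]
        refine lintegral_mono fun g => ?_
        by_cases hg : g ∈ SL2Box B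
        · rw [Set.indicator_of_mem hg]
          have hψg : ENNReal.ofReal (ψ g) ≤ ENNReal.ofReal M := ENNReal.ofReal_le_ofReal (hM g)
          simp only [ha, hb]
          refine (mul_le_mul_right (mul_le_mul_right hψg _) _).trans_eq ?_
          ring
        · have hψg : ψ g = 0 := image_eq_zero_of_notMem_tsupport fun h => hg (hKB h)
          rw [Set.indicator_of_notMem hg, hψg]
          simp
    _ = ∫⁻ g in SL2Box B,
        (∫⁻ ξ in S, a ξ * a (Matrix.toEuclideanLin (g : Matrix (Fin 2) (Fin 2) ℝ) ξ)) *
        (∫⁻ η in S, ENNReal.ofReal M *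
          (b η * b (Matrix.toEuclideanLin (g : Matrix (Fin 2) (Fin 2) ℝ) η))) ∂lam :=
        lintegral_lintegral_lintegral_mul hpm hqm
    _ ≤ ∫⁻ g in SL2Box B, ENNReal.ofReal (2 * CE * 2 ^ ((j : ℝ) * (2 - sE))) *
        (ENNReal.ofReal M * ∫⁻ η in S,
          b η * b (Matrix.toEuclideanLin (g : Matrix (Fin 2) (Fin 2) ℝ) η)) ∂lam := by
        refine setLIntegral_mono' (measurableSet_SL2Box B) fun g hg => ?_
        rw [lintegral_const_mul' _ _ ENNReal.ofReal_ne_top]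
        exact mul_le_mul_left (hEg g hg) _
    _ ≤ ENNReal.ofReal (2 * CE * 2 ^ ((j : ℝ) * (2 - sE))) * (ENNReal.ofReal M *
        (ENNReal.ofReal (CG * (((2 : ℝ) ^ j) ^ 2)⁻¹) *
          (ENNReal.ofReal (CF * 2 ^ ((j : ℝ) * (2 - sF))) *
            ENNReal.ofReal (CH * 2 ^ ((j : ℝ) * (2 - sH)))))) := by
        rw [lintegral_const_mul' _ _ ENNReal.ofReal_ne_top,
          lintegral_const_mul' _ _ ENNReal.ofReal_ne_top]
        gcongr
        exact hFHg.trans (mul_le_mul_right hbD _)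
    _ = _ := by
        rw [← ENNReal.ofReal_mul (by positivity), ← ENNReal.ofReal_mul (by positivity),
          ← ENNReal.ofReal_mul (by positivity), ← ENNReal.ofReal_mul (by positivity)]
        congr 1
        have hpow : (((2 : ℝ) ^ j) ^ 2)⁻¹ = 2 ^ ((j : ℝ) * (-2)) := by
          rw [Real.rpow_mul two_pos.le, Real.rpow_natCast, Real.rpow_neg (by positivity),
            Real.rpow_two]
        have hexp : (j : ℝ) * (4 - sE - sF - sH) = (j : ℝ) * (2 - sE) + (j : ℝ) * (-2) +
            (j : ℝ) * (2 - sF) + (j : ℝ) * (2 - sH) := by ring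
        rw [hpow, hexp, Real.rpow_add two_pos, Real.rpow_add two_pos, Real.rpow_add two_pos]
        ring
end
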